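/- arXiv:1512.05752 — 5 statements merged into one kernel-verified Lean document; each statement's English description precedes it below -/
import Mathlib

section
/- Let L be a left Leibniz algebra over a field F, let H be a subalgebra of L whose multiplication is antisymmetric (so H is a Lie algebra), and let A be an ideal of L with A·A = 0 and A·L = 0 such that L = A ⊕ H as vector spaces. Then the vector space A ⊕ H equipped with the product [a+h, b+k] = hb − ka + hk (for a,b ∈ A, h,k ∈ H, where the products on the right are those of L) is a Lie algebra, called the companion Lie algebra of L. -/
/-!
Basic theory of (left) Leibniz algebras, formalized over an arbitrary field `F`.
A Leibniz algebra structure on an `F`-vector space `L` is given by a bilinear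
multiplication `m : L →ₗ[F] L →ₗ[F] L` satisfying the left Leibniz identity.
-/

open Submodule Module

section LeibnizDefs

variable {F : Type*} [Field F] {L : Type*} [AddCommGroup L] [Module F L]
variable (m : L →ₗ[F] L →ₗ[F] L)

/-- The left Leibniz identity: `a(bc) = (ab)c + b(ac)`. -/
def IsLeibniz : Prop :=
  ∀ a b c : L, m a (m b c) = m (m a b) c + m b (m a c)

/-- The multiplication is antisymmetric, i.e. the algebra is a Lie algebra. -/
def IsLie : Prop := ∀ a b : L, m a b = - m b a

/-- The product of two subspaces: the span of all products `x·y`, `x ∈ P`, `y ∈ Q`. -/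
abbrev mprod (P Q : Submodule F L) : Submodule F L := Submodule.map₂ m P Q

/-- A subalgebra: a subspace closed under multiplication. -/
def IsSubalg (S : Submodule F L) : Prop := ∀ x ∈ S, ∀ y ∈ S, m x y ∈ S

/-- An ideal of `L`: a subspace `I` with `L·I ⊆ I` and `I·L ⊆ I`. -/
def IsIdeal (I : Submodule F L) : Prop :=
  ∀ (x : L), ∀ y ∈ I, m x y ∈ I ∧ m y x ∈ I

/-- An ideal `I` of a subalgebra `S`. -/
def IsIdealOf (S I : Submodule F L) : Prop :=
  I ≤ S ∧ ∀ x ∈ S, ∀ y ∈ I, m x y ∈ I ∧ m y x ∈ I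

/-- A minimal ideal: a nonzero ideal containing no nonzero proper subideal of `L`. -/
def IsMinIdeal (A : Submodule F L) : Prop :=
  IsIdeal m A ∧ A ≠ ⊥ ∧ ∀ J, IsIdeal m J → J ≤ A → J = ⊥ ∨ J = A

/-- The derived series of a subspace: `S^(0) = S`, `S^(n+1) = S^(n)·S^(n)`. -/
def derSeries (S : Submodule F L) : ℕ → Submodule F L
  | 0 => S
  | n + 1 => mprod m (derSeries S n) (derSeries S n)

/-- A subalgebra is solvable if its derived series reaches `0`. -/
def IsSolvableSub (S : Submodule F L) : Prop := ∃ n, derSeries m S n = ⊥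

/-- The Leibniz algebra `L` is solvable. -/
abbrev IsSolvableAlg : Prop := IsSolvableSub m (⊤ : Submodule F L)

/-- The lower central series of a subspace: `N^1 = N`, `N^(k+1) = N·N^k`. -/
def lcSeries (N : Submodule F L) : ℕ → Submodule F L
  | 0 => N
  | k + 1 => mprod m N (lcSeries N k)

/-- A subalgebra is nilpotent if its lower central series reaches `0`. -/
def IsNilpotentSub (N : Submodule F L) : Prop := ∃ k, lcSeries m N k = ⊥

/-- A subalgebra `S` is strongly solvable if `S² = S·S` is nilpotent. -/
def IsStronglySolvable (S : Submodule F L) : Prop :=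
  IsNilpotentSub m (mprod m S S)

/-- A maximal subalgebra: a proper subalgebra not contained in any larger proper
subalgebra. -/
def IsMaxSubalg (S : Submodule F L) : Prop :=
  IsSubalg m S ∧ S ≠ ⊤ ∧ ∀ T, IsSubalg m T → S ≤ T → T = S ∨ T = ⊤

/-- The Frattini subalgebra `F(L)`: the intersection of all maximal subalgebras. -/
def frattiniSub : Submodule F L := sInf {S | IsMaxSubalg m S}

/-- The Frattini ideal `φ(L)`: the largest ideal contained in the Frattini
subalgebra. -/
def frattiniIdeal : Submodule F L :=
  sSup {I | IsIdeal m I ∧ I ≤ frattiniSub m}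

/-- `Leib(L)`: the span of all squares `x·x`. -/
def leibIdeal : Submodule F L := Submodule.span F {z | ∃ x : L, z = m x x}

/-- The subalgebra generated by a set. -/
def genBy (s : Set L) : Submodule F L := sInf {S | IsSubalg m S ∧ s ⊆ S}

/-- A subalgebra is two-generated if it is generated as an algebra by two elements. -/
def TwoGenerated (S : Submodule F L) : Prop := ∃ x y : L, genBy m {x, y} = S

/-- A subalgebra `S` is supersolvable if there is a chain of ideals of `S`,
`0 = S₀ ⊂ S₁ ⊂ ⋯ ⊂ Sₙ = S`, with `dim Sᵢ = i`. -/
def IsSupersolvable (S : Submodule F L) : Prop :=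
  ∃ (n : ℕ) (c : ℕ → Submodule F L), c 0 = ⊥ ∧ c n = S ∧
    (∀ i, i < n → c i ≤ c (i + 1)) ∧
    (∀ i, i ≤ n → IsIdealOf m S (c i)) ∧
    (∀ i, i ≤ n → Module.finrank F (c i) = i)

/-- A subspace `S` is nil on `L` if left multiplication by each of its elements is a
nilpotent operator. -/
def IsNilOn (S : Submodule F L) : Prop :=
  ∀ x ∈ S, IsNilpotent (m x : Module.End F L)

open scoped TensorProduct in
/-- A subspace `S` is triangulable on `L` if, after extending scalars to the algebraic
closure `K` of `F`, the space `K ⊗ L` admits a basis with respect to which the left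
multiplication operators by all elements of `K ⊗ S` are upper triangular matrices.
(Since upper triangular matrices form a `K`-subspace of matrices, it suffices that the
base-changed left multiplication by each `x ∈ S` is upper triangular.) -/
def IsTriangulableOn (S : Submodule F L) : Prop :=
  ∃ (n : ℕ) (b : Basis (Fin n) (AlgebraicClosure F) ((AlgebraicClosure F) ⊗[F] L)),
    ∀ x ∈ S, ∀ i j : Fin n, j < i →
      LinearMap.toMatrix b b (LinearMap.baseChange (AlgebraicClosure F) (m x)) i j = 0

end LeibnizDefs

/-- Let `L` be a left Leibniz algebra over a field `F`, `H` a subalgebra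
of `L` with antisymmetric multiplication (so `H` is a Lie algebra), and `A` an ideal of
`L` with `A·A = 0` and `A·L = 0`, such that `L = A ⊕ H` as vector spaces. Then the vector
space `A ⊕ H = L` equipped with the product `[a+h, b+k] = hb − ka + hk` is a Lie algebra
(the companion Lie algebra of `L`): such a bilinear product `m'` exists, is
antisymmetric, and satisfies the (left) Leibniz identity (equivalently, the Jacobi
identity). -/
theorem companion_lie_algebra
    {F : Type*} [Field F] {L : Type*} [AddCommGroup L] [Module F L]
    [FiniteDimensional F L]
    (m : L →ₗ[F] L →ₗ[F] L) (hm : IsLeibniz m)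
    (H : Submodule F L) (hH : IsSubalg m H)
    (hHLie : ∀ h ∈ H, ∀ k ∈ H, m h k = - m k h)
    (A : Submodule F L) (hA : IsIdeal m A)
    (hAA : ∀ a ∈ A, ∀ b ∈ A, m a b = 0)
    (hAL : ∀ a ∈ A, ∀ x : L, m a x = 0)
    (hdisj : A ⊓ H = ⊥) (hsum : A ⊔ H = ⊤) :
    ∃ m' : L →ₗ[F] L →ₗ[F] L,
      (∀ a ∈ A, ∀ h ∈ H, ∀ b ∈ A, ∀ k ∈ H,
        m' (a + h) (b + k) = m h b - m k a + m h k) ∧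
      (∀ x y : L, m' x y = - m' y x) ∧ IsLeibniz m' := by
  have hc : IsCompl A H := IsCompl.of_eq hdisj hsum
  obtain ⟨p, hpA, hpH⟩ : ∃ p : L →ₗ[F] L, (∀ a ∈ A, p a = a) ∧ (∀ h ∈ H, p h = 0) := by
    refine ⟨A.subtype ∘ₗ A.projectionOnto H hc, fun a ha => ?_, fun h hh => ?_⟩
    · have := Submodule.projectionOnto_apply_left hc ⟨a, ha⟩
      exact congrArg Subtype.val this
    · have := Submodule.projectionOnto_apply_right hc ⟨h, hh⟩
      exact congrArg Subtype.val this
  have key : ∀ a ∈ A, ∀ h ∈ H, ∀ b ∈ A, ∀ k ∈ H,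
      (m - m.flip ∘ₗ p) (a + h) (b + k) = m h b - m k a + m h k := by
    intro a ha h hh b hb k hk
    simp only [LinearMap.sub_apply, LinearMap.comp_apply, LinearMap.flip_apply, map_add,
      LinearMap.add_apply, hpA a ha, hpH h hh, hAL a ha, hAL b hb, map_zero, LinearMap.zero_apply]
    abel
  have dec : ∀ x : L, ∃ a ∈ A, ∃ h ∈ H, a + h = x := fun x =>
    Submodule.mem_sup.mp (hsum ▸ Submodule.mem_top)
  refine ⟨m - m.flip ∘ₗ p, key, ?_, ?_⟩
  · intro x y
    obtain ⟨a, ha, h, hh, rfl⟩ := dec x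
    obtain ⟨b, hb, k, hk, rfl⟩ := dec y
    rw [key a ha h hh b hb k hk, key b hb k hk a ha h hh, hHLie h hh k hk]
    abel
  · intro x y z
    obtain ⟨a, ha, h, hh, rfl⟩ := dec x
    obtain ⟨b, hb, k, hk, rfl⟩ := dec y
    obtain ⟨c, hc', l, hl, rfl⟩ := dec z
    have mem : ∀ u v : L, ∀ d ∈ A, ∀ e ∈ A, m u d - m v e ∈ A := fun u v d hd e he =>
      A.sub_mem (hA u d hd).1 (hA v e he).1
    have hm2 : ∀ u v w : L, m (m u v) w = m u (m v w) - m v (m u w) := fun u v w =>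
      eq_sub_of_add_eq (hm u v w).symm
    rw [key b hb k hk c hc' l hl, key a ha h hh b hb k hk, key a ha h hh c hc' l hl,
      key a ha h hh _ (mem k l c hc' b hb) _ (hH k hk l hl),
      key _ (mem h k b hb a ha) _ (hH h hh k hk) c hc' l hl,
      key b hb k hk _ (mem h l c hc' a ha) _ (hH h hh l hl)]
    simp only [hm2, map_sub]
    abel
end

section
/- Let 𝓕 be a formation of solvable Leibniz algebras over a field F (a class of finite-dimensional solvable Leibniz algebras closed under epimorphic images and such that L/A ∈ 𝓕 and L/B ∈ 𝓕 imply L/(A∩B) ∈ 𝓕). Let L be a finite-dimensional solvable Leibniz algebra with φ(L) = 0 such that L ∉ 𝓕 but every proper subalgebra of L belongs to 𝓕, and suppose L is not a Lie algebra. Write L = A + H with A the unique minimal ideal and H a complementing subalgebra. Then A = Leib(L), A is self-centralizing in L (the centralizer of A in L equals A), and H ≅ L/A is a Lie algebra. -/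
/-!
Basic theory of (left) Leibniz algebras, formalized over an arbitrary field `F`.
A Leibniz algebra structure on an `F`-vector space `L` is given by a bilinear
multiplication `m : L →ₗ[F] L →ₗ[F] L` satisfying the left Leibniz identity.
-/

open Submodule Module

section Formation

variable {F : Type} [Field F]

/-- A bundled finite-dimensional Leibniz algebra over `F`. -/
structure LeibnizAlg (F : Type) [Field F] where
  carrier : Type
  [isAddCommGroup : AddCommGroup carrier]
  [isModule : Module F carrier]
  [isFin : FiniteDimensional F carrier]
  mul : carrier →ₗ[F] carrier →ₗ[F] carrier
  leibniz : IsLeibniz mul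

attribute [instance] LeibnizAlg.isAddCommGroup LeibnizAlg.isModule LeibnizAlg.isFin

/-- Bundle a Leibniz algebra structure. -/
def LeibnizAlg.of {L : Type} [AddCommGroup L] [Module F L] [FiniteDimensional F L]
    (m : L →ₗ[F] L →ₗ[F] L) (hm : IsLeibniz m) : LeibnizAlg F :=
  { carrier := L, mul := m, leibniz := hm }

/-- The multiplication of a subalgebra, as a bilinear map on the subspace. -/
def subMul {L : Type} [AddCommGroup L] [Module F L]
    (m : L →ₗ[F] L →ₗ[F] L) (S : Submodule F L) (hS : IsSubalg m S) :
    S →ₗ[F] S →ₗ[F] S :=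
  LinearMap.mk₂ F (fun x y => ⟨m x y, hS x x.2 y y.2⟩)
    (fun x x' y => by apply Subtype.ext; simp)
    (fun c x y => by apply Subtype.ext; simp)
    (fun x y y' => by apply Subtype.ext; simp)
    (fun c x y => by apply Subtype.ext; simp)

/-- A subalgebra of a Leibniz algebra, as a Leibniz algebra in its own right. -/
def subAlgOf {L : Type} [AddCommGroup L] [Module F L] [FiniteDimensional F L]
    (m : L →ₗ[F] L →ₗ[F] L) (hm : IsLeibniz m)
    (S : Submodule F L) (hS : IsSubalg m S) : LeibnizAlg F :=
  { carrier := S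
    mul := subMul m S hS
    leibniz := fun a b c => by
      apply Subtype.ext
      simpa [subMul] using hm a b c }

/-- `QuotIn 𝓕 M A` says that the quotient of `M` by the ideal `A` belongs to the class
`𝓕`; phrased via surjective homomorphisms with kernel `A`, to avoid constructing the
quotient algebra. -/
def QuotIn (𝓕 : Set (LeibnizAlg F)) (M : LeibnizAlg F)
    (A : Submodule F M.carrier) : Prop :=
  ∃ N ∈ 𝓕, ∃ f : M.carrier →ₗ[F] N.carrier,
    (∀ x y, f (M.mul x y) = N.mul (f x) (f y)) ∧
    Function.Surjective f ∧ LinearMap.ker f = A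

/-- A formation of solvable Leibniz algebras: a class of finite-dimensional solvable
Leibniz algebras closed under epimorphic images and such that whenever `A`, `B` are
ideals of a Leibniz algebra `M` with `M/A ∈ 𝓕` and `M/B ∈ 𝓕`, then `M/(A ∩ B) ∈ 𝓕`. -/
def IsFormation (𝓕 : Set (LeibnizAlg F)) : Prop :=
  (∀ M ∈ 𝓕, IsSolvableAlg M.mul) ∧
  (∀ M ∈ 𝓕, ∀ N : LeibnizAlg F,
    (∃ f : M.carrier →ₗ[F] N.carrier,
      (∀ x y, f (M.mul x y) = N.mul (f x) (f y)) ∧ Function.Surjective f) → N ∈ 𝓕) ∧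
  (∀ (M : LeibnizAlg F) (A B : Submodule F M.carrier),
    IsIdeal M.mul A → IsIdeal M.mul B →
    QuotIn 𝓕 M A → QuotIn 𝓕 M B → QuotIn 𝓕 M (A ⊓ B))

end Formation

theorem exists_min_ideal {F : Type} [Field F]
    {L : Type} [AddCommGroup L] [Module F L] [FiniteDimensional F L]
    (m : L →ₗ[F] L →ₗ[F] L) (B : Submodule F L) (hB : IsIdeal m B) (hne : B ≠ ⊥) :
    ∃ A, IsMinIdeal m A ∧ A ≤ B := by
  obtain ⟨A, ⟨hA1, hA2, hA3⟩, hA⟩ :=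
    (wellFounded_lt (α := Submodule F L)).has_min
      {I | IsIdeal m I ∧ I ≠ ⊥ ∧ I ≤ B} ⟨B, hB, hne, le_rfl⟩
  refine ⟨A, ⟨hA1, hA2, fun J hJ hJA => ?_⟩, hA3⟩
  by_contra hcon
  rw [not_or] at hcon
  exact hA J ⟨hJ, hcon.1, hJA.trans hA3⟩ (lt_of_le_of_ne hJA hcon.2)

theorem ideal_of_complement_eq_bot {F : Type} [Field F]
    {L : Type} [AddCommGroup L] [Module F L] [FiniteDimensional F L]
    (m : L →ₗ[F] L →ₗ[F] L) (A H : Submodule F L)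
    (hmin : IsMinIdeal m A) (huniq : ∀ A', IsMinIdeal m A' → A' = A)
    (hdisj : A ⊓ H = ⊥) (hsum : A ⊔ H = ⊤)
    (B : Submodule F L) (hBH : B ≤ H)
    (h1 : ∀ h ∈ H, ∀ b ∈ B, m h b ∈ B ∧ m b h ∈ B)
    (h2 : ∀ a ∈ A, ∀ b ∈ B, m a b = 0 ∧ m b a = 0) : B = ⊥ := by
  by_contra hne
  have hid : IsIdeal m B := by
    intro x b hb
    have hx : x ∈ A ⊔ H := hsum ▸ Submodule.mem_top
    obtain ⟨a, ha, h, hh, rfl⟩ := Submodule.mem_sup.1 hx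
    simp only [map_add, LinearMap.add_apply, (h2 a ha b hb).1, (h2 a ha b hb).2, zero_add]
    exact h1 h hh b hb
  obtain ⟨A', hA', hle⟩ := exists_min_ideal m B hid hne
  rw [huniq A' hA'] at hle
  exact hmin.2.1 (le_bot_iff.1 (hdisj ▸ le_inf le_rfl (hle.trans hBH)))

theorem leib_mul_eq_zero {F : Type} [Field F]
    {L : Type} [AddCommGroup L] [Module F L]
    (m : L →ₗ[F] L →ₗ[F] L) (hm : IsLeibniz m) (x : L) (hx : x ∈ leibIdeal m) (y : L) :
    m x y = 0 := by
  unfold leibIdeal at hx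
  induction hx using Submodule.span_induction with
  | mem x h =>
    obtain ⟨a, rfl⟩ := h
    have := hm a a y
    simpa using this
  | zero => simp
  | add a b _ _ ha hb => simp [ha, hb]
  | smul c a _ ha => simp [ha]

theorem leib_isIdeal {F : Type} [Field F]
    {L : Type} [AddCommGroup L] [Module F L]
    (m : L →ₗ[F] L →ₗ[F] L) (hm : IsLeibniz m) : IsIdeal m (leibIdeal m) := by
  intro y x hx
  refine ⟨?_, by rw [leib_mul_eq_zero m hm x hx y]; exact zero_mem _⟩
  have hsq : ∀ z, m z z ∈ leibIdeal m := fun z => Submodule.subset_span ⟨z, rfl⟩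
  unfold leibIdeal at hx
  induction hx using Submodule.span_induction with
  | mem x h =>
    obtain ⟨a, rfl⟩ := h
    have e : m y (m a a) = m (m y a + a) (m y a + a) - m (m y a) (m y a) - m a a := by
      rw [hm y a a]
      simp only [map_add, LinearMap.add_apply]
      abel
    rw [e]
    exact sub_mem (sub_mem (hsq _) (hsq _)) (hsq _)
  | zero => simp
  | add a b _ _ ha hb => rw [map_add]; exact add_mem ha hb
  | smul c a _ ha => rw [map_smul]; exact Submodule.smul_mem _ _ ha

theorem antisymm_of_sq {F : Type} [Field F]
    {L : Type} [AddCommGroup L] [Module F L]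
    (m : L →ₗ[F] L →ₗ[F] L) (H : Submodule F L) (h0 : ∀ x ∈ H, m x x = 0) :
    ∀ h ∈ H, ∀ k ∈ H, m h k = - m k h := by
  intro h hh k hk
  have e := h0 (h + k) (add_mem hh hk)
  simp only [map_add, LinearMap.add_apply, h0 h hh, h0 k hk, zero_add, add_zero] at e
  first
    | exact eq_neg_of_add_eq_zero_left e
    | exact eq_neg_of_add_eq_zero_right e

/-- Let `𝓕` be a formation of solvable Leibniz algebras over `F`. Let
`L` be a finite-dimensional solvable Leibniz algebra with `φ(L) = 0` such that `L ∉ 𝓕`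
but every proper subalgebra of `L` belongs to `𝓕`, and suppose `L` is not a Lie algebra.
Write `L = A + H` with `A` the unique minimal ideal and `H` a complementing subalgebra.
Then `A = Leib(L)`, `A` is self-centralizing in `L` (the centralizer
`{x : xA = Ax = 0}` of `A` in `L` equals `A`), and `H ≅ L/A` is a Lie algebra. -/
theorem minimal_ideal_is_leib_and_complement_is_lie
    {F : Type} [Field F] (𝓕 : Set (LeibnizAlg F)) (h𝓕 : IsFormation 𝓕)
    {L : Type} [AddCommGroup L] [Module F L] [FiniteDimensional F L]
    (m : L →ₗ[F] L →ₗ[F] L) (hm : IsLeibniz m)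
    (hsolv : IsSolvableAlg m)
    (hphi : frattiniIdeal m = ⊥)
    (hnotin : LeibnizAlg.of m hm ∉ 𝓕)
    (hproper : ∀ (S : Submodule F L) (hS : IsSubalg m S), S ≠ ⊤ →
      subAlgOf m hm S hS ∈ 𝓕)
    (hnotLie : ¬ IsLie m)
    (A H : Submodule F L)
    (hmin : IsMinIdeal m A) (huniq : ∀ A', IsMinIdeal m A' → A' = A)
    (hH : IsSubalg m H) (hdisj : A ⊓ H = ⊥) (hsum : A ⊔ H = ⊤) :
    A = leibIdeal m ∧
    (∀ x : L, (∀ a ∈ A, m x a = 0 ∧ m a x = 0) ↔ x ∈ A) ∧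
    (∀ h ∈ H, ∀ k ∈ H, m h k = - m k h) := by
  have hne : leibIdeal m ≠ ⊥ := by
    intro h
    refine hnotLie fun a b => antisymm_of_sq m ⊤ (fun x _ => ?_) a trivial b trivial
    have : m x x ∈ leibIdeal m := Submodule.subset_span ⟨x, rfl⟩
    rw [h] at this
    simpa using this
  have hAL : A ≤ leibIdeal m := by
    obtain ⟨A', hA', hle⟩ := exists_min_ideal m _ (leib_isIdeal m hm) hne
    rwa [huniq A' hA'] at hle
  have hLH : leibIdeal m ⊓ H = ⊥ := by
    refine ideal_of_complement_eq_bot m A H hmin huniq hdisj hsum _ inf_le_right ?_ ?_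
    · rintro h hh b ⟨hb1, hb2⟩
      exact ⟨⟨(leib_isIdeal m hm h b hb1).1, hH h hh b hb2⟩,
        ⟨(leib_isIdeal m hm h b hb1).2, hH b hb2 h hh⟩⟩
    · rintro a ha b ⟨hb1, hb2⟩
      exact ⟨leib_mul_eq_zero m hm a (hAL ha) b, leib_mul_eq_zero m hm b hb1 a⟩
  have hsplit : ∀ x : L, ∃ a ∈ A, ∃ h ∈ H, a + h = x := fun x =>
    Submodule.mem_sup.1 (hsum ▸ Submodule.mem_top)
  have hLA : leibIdeal m ≤ A := by
    intro x hx
    obtain ⟨a, ha, h, hh, rfl⟩ := hsplit x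
    have h1 : h ∈ leibIdeal m := (Submodule.add_mem_iff_right _ (hAL ha)).1 hx
    have h2 : h ∈ leibIdeal m ⊓ H := ⟨h1, hh⟩
    rw [hLH, Submodule.mem_bot] at h2
    simpa [h2] using ha
  have hAA : ∀ a ∈ A, ∀ x, m a x = 0 := fun a ha x => leib_mul_eq_zero m hm a (hAL ha) x
  refine ⟨le_antisymm hAL hLA, ?_, ?_⟩
  · let C : Submodule F L :=
      { carrier := {x | ∀ a ∈ A, m x a = 0}
        add_mem' := fun {x y} hx hy a ha => by simp [hx a ha, hy a ha]
        zero_mem' := fun a _ => by simp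
        smul_mem' := fun c x hx a ha => by simp [hx a ha] }
    have hCmem : ∀ x, x ∈ C ↔ ∀ a ∈ A, m x a = 0 := fun x => Iff.rfl
    have hCH : C ⊓ H = ⊥ := by
      refine ideal_of_complement_eq_bot m A H hmin huniq hdisj hsum _ inf_le_right ?_ ?_
      · rintro h hh b ⟨hb1, hb2⟩
        refine ⟨⟨fun a ha => ?_, hH h hh b hb2⟩, ⟨fun a ha => ?_, hH b hb2 h hh⟩⟩
        · have e := hm h b a
          rw [hb1 a ha, hb1 _ (hmin.1 h a ha).1] at e
          simpa using e.symm
        · have e := hm b h a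
          rw [hb1 a ha, hb1 _ (hmin.1 h a ha).1] at e
          simpa using e.symm
      · rintro a ha b ⟨hb1, hb2⟩
        exact ⟨hAA a ha b, hb1 a ha⟩
    intro x
    constructor
    · intro hx
      obtain ⟨a, ha, h, hh, rfl⟩ := hsplit x
      have h1 : h ∈ C := by
        intro b hb
        have e := (hx b hb).1
        simpa [hAA a ha b] using e
      have h2 : h ∈ C ⊓ H := ⟨h1, hh⟩
      rw [hCH, Submodule.mem_bot] at h2
      simpa [h2] using ha
    · intro hx a ha
      exact ⟨hAA x hx a, hAA a ha x⟩
  · refine antisymm_of_sq m H fun x hx => ?_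
    have h1 : m x x ∈ leibIdeal m ⊓ H := ⟨Submodule.subset_span ⟨x, rfl⟩, hH x hx x hx⟩
    rw [hLH] at h1
    simpa using h1
end

section
/- Let L be a finite-dimensional solvable Leibniz algebra over a field F with φ(L) = 0 which is minimally non-strongly-solvable (L is not strongly solvable but every proper subalgebra of L is strongly solvable). Then F has characteristic p > 0, and L = A + H is a semidirect sum where: (1) A is the unique minimal ideal of L, (2) dim A ≥ 2, (3) A·A = 0, and (4) either H = M ∔ Fx where M is a minimal abelian ideal of H, or H is the three-dimensional Heisenberg algebra. Moreover, either L is a Lie algebra, or else H is a Lie algebra, A = Leib(L), and A·L = 0. -/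
/-!
Basic theory of (left) Leibniz algebras, formalized over an arbitrary field `F`.
A Leibniz algebra structure on an `F`-vector space `L` is given by a bilinear
multiplication `m : L →ₗ[F] L →ₗ[F] L` satisfying the left Leibniz identity.
-/

open Submodule Module

section Helpers

open Polynomial in
theorem comm_aeval {F E : Type*} [Field F] [Ring E] [Algebra F E] (x n u : E)
    (h1 : x * n - n * x = u) (h2 : n * u = u * n) (q : Polynomial F) :
    x * aeval n q - aeval n q * x = aeval n (derivative q) * u := by
  have hpow : ∀ k : ℕ, x * n ^ k - n ^ k * x = (k : E) * n ^ (k - 1) * u := by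
    intro k
    induction k with
    | zero => simp
    | succ k ih =>
      have hc : n ^ k * n = n * n ^ k := (Commute.pow_self n k).eq
      have e : x * n ^ (k+1) - n ^ (k+1) * x
          = (x * n ^ k - n ^ k * x) * n + n ^ k * (x * n - n * x) := by
        rw [pow_succ]; noncomm_ring
      rw [e, ih, h1, mul_assoc, ← h2]
      rcases k with _ | k
      · simp
      · simp only [Nat.add_sub_cancel]
        push_cast
        rw [pow_succ n k]
        noncomm_ring
  induction q using Polynomial.induction_on' with
  | add p q hp hq =>
    simp only [map_add, mul_add, add_mul]
    rw [← hp, ← hq]; abel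
  | monomial k a =>
    rw [derivative_monomial, aeval_monomial, aeval_monomial, map_mul, map_natCast]
    rw [← mul_assoc, ← Algebra.commutes a x, mul_assoc, mul_assoc, ← mul_sub, hpow]
    simp only [mul_assoc]

theorem comm_pow_mul {E : Type*} [Ring E] (x u : E)
    (h3 : u * (x * u - u * x) = (x * u - u * x) * u) (j : ℕ) :
    (x * u ^ j - u ^ j * x) * u = u ^ j * ((j : E) * (x * u - u * x)) := by
  induction j with
  | zero => simp
  | succ j ih =>
    have e : (x * u ^ (j+1) - u ^ (j+1) * x) * u
        = ((x * u ^ j - u ^ j * x) * u + u ^ j * (x * u - u * x)) * u := by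
      rw [pow_succ]; noncomm_ring
    rw [e, ih]
    set v := x * u - u * x
    have : ((j : E) * v) * u = u * ((j : E) * v) := by
      rw [mul_assoc, ← h3, ← mul_assoc, ← mul_assoc, (Nat.cast_commute j u).eq]
    rw [add_mul, mul_assoc, this, mul_assoc, ← h3, pow_succ]
    push_cast
    simp only [add_mul, one_mul, mul_add, mul_assoc]

open Polynomial in
theorem nilp_aux {F E : Type*} [Field F] [CharZero F] [Ring E] [Algebra F E] (x n u : E)
    (h1 : x * n - n * x = u) (h2 : n * u = u * n)
    (h3 : u * (x * u - u * x) = (x * u - u * x) * u) :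
    ∀ (d : ℕ) (q : Polynomial F) (j : ℕ), q.natDegree = d → q ≠ 0 → aeval n q * u ^ j = 0 →
      IsNilpotent u := by
  intro d
  induction d with
  | zero =>
    intro q j hd hq h
    rw [Polynomial.natDegree_eq_zero] at hd
    obtain ⟨c, rfl⟩ := hd
    have hc : c ≠ 0 := by rintro rfl; simp at hq
    refine ⟨j, ?_⟩
    rw [aeval_C, ← Algebra.smul_def] at h
    exact (smul_eq_zero_iff_right hc).mp h
  | succ d ih =>
    intro q j hd hq h
    have hdd : (derivative q).natDegree = d := by
      rw [natDegree_derivative]; omega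
    have hne : derivative q ≠ 0 := by
      intro h0
      have := derivative_eq_zero.mp h0
      omega
    refine ih (derivative q) (j + 2) hdd hne ?_
    have e1 := comm_aeval x n u h1 h2 q
    have e2 := comm_pow_mul x u h3 j
    have huc : u * u ^ j = u ^ j * u := (Commute.self_pow u j).eq
    have e3 : (x * (aeval n q * u ^ j) - (aeval n q * u ^ j) * x) * u
        = (x * aeval n q - aeval n q * x) * u ^ j * u
          + aeval n q * ((x * u ^ j - u ^ j * x) * u) := by noncomm_ring
    rw [e1, e2, h, ← mul_assoc (aeval n q), h] at e3
    simp only [mul_zero, zero_mul, sub_zero, add_zero] at e3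
    rw [e3, mul_assoc _ u, huc]
    simp only [pow_succ, mul_assoc]

theorem nilp_of_comm {F E : Type*} [Field F] [CharZero F] [Ring E] [Algebra F E]
    [FiniteDimensional F E] (x n u : E)
    (h1 : x * n - n * x = u) (h2 : n * u = u * n)
    (h3 : u * (x * u - u * x) = (x * u - u * x) * u) : IsNilpotent u :=
  nilp_aux x n u h1 h2 h3 _ (minpoly F n) 0 rfl
    (minpoly.ne_zero (Algebra.IsIntegral.isIntegral n)) (by simp)

variable {F : Type*} [Field F] {L : Type*} [AddCommGroup L] [Module F L]
variable {m : L →ₗ[F] L →ₗ[F] L}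

theorem mprod_le_iff {P Q R : Submodule F L} :
    mprod m P Q ≤ R ↔ ∀ x ∈ P, ∀ y ∈ Q, m x y ∈ R := Submodule.map₂_le

theorem mem_mprod {P Q : Submodule F L} {x y : L} (hx : x ∈ P) (hy : y ∈ Q) :
    m x y ∈ mprod m P Q := Submodule.apply_mem_map₂ m hx hy

theorem mprod_mono {P Q P' Q' : Submodule F L} (h : P ≤ P') (h' : Q ≤ Q') :
    mprod m P Q ≤ mprod m P' Q' := Submodule.map₂_le_map₂ h h'

theorem mprod_invol (hm : IsLeibniz m) {P Q : Submodule F L} {x : L}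
    (hP : ∀ p ∈ P, m x p ∈ P) (hQ : ∀ q ∈ Q, m x q ∈ Q) :
    ∀ z ∈ mprod m P Q, m x z ∈ mprod m P Q := by
  intro z hz
  have : mprod m P Q ≤ (mprod m P Q).comap (m x) := by
    rw [mprod_le_iff]
    intro p hp q hq
    rw [Submodule.mem_comap, hm]
    exact add_mem (mem_mprod (hP p hp) hq) (mem_mprod hp (hQ q hq))
  exact this hz

/-- product of an ideal of `S` with itself is an ideal of `S`. -/
theorem mprod_self_ideal (hm : IsLeibniz m) {S I : Submodule F L} (hI : IsIdealOf m S I) :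
    IsIdealOf m S (mprod m I I) := by
  have hle : mprod m I I ≤ I := by
    rw [mprod_le_iff]; intro x hx y hy
    exact (hI.2 x (hI.1 hx) y hy).1
  refine ⟨hle.trans hI.1, fun x hx y hy => ⟨?_, ?_⟩⟩
  · exact mprod_invol hm (fun p hp => (hI.2 x hx p hp).1) (fun p hp => (hI.2 x hx p hp).1) y hy
  · have : mprod m I I ≤ (mprod m I I).comap (m.flip x) := by
      rw [mprod_le_iff]
      intro p hp q hq
      rw [Submodule.mem_comap, LinearMap.flip_apply]
      have := hm p q x
      have e : m (m p q) x = m p (m q x) - m q (m p x) := by rw [this]; abel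
      rw [e]
      exact sub_mem (mem_mprod hp (hI.2 x hx q hq).2) (mem_mprod hq (hI.2 x hx p hp).2)
    exact this hy

theorem isIdeal_iff_top {I : Submodule F L} : IsIdeal m I ↔ IsIdealOf m ⊤ I :=
  ⟨fun h => ⟨le_top, fun x _ y hy => h x y hy⟩, fun h x y hy => h.2 x trivial y hy⟩

/-- Structure of `H`. -/
theorem H_structure [FiniteDimensional F L] (hm : IsLeibniz m) (H : Submodule F L)
    (hH : IsSubalg m H)
    (halt : ∀ h ∈ H, m h h = 0) (hanti : ∀ h ∈ H, ∀ k ∈ H, m h k = - m k h)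
    (g1 : ∀ B ≤ H, IsSubalg m B → B ≠ H → IsIdealOf m H (mprod m B B) → mprod m B B = ⊥)
    (g3 : mprod m H H ≠ H) (g3' : mprod m H H ≠ ⊥) :
    ((∃ (M : Submodule F L) (x : L),
          IsIdealOf m H M ∧ M ≠ ⊥ ∧
          (∀ J, IsIdealOf m H J → J ≤ M → J = ⊥ ∨ J = M) ∧
          (∀ a ∈ M, ∀ b ∈ M, m a b = 0) ∧
          x ∈ H ∧ M ⊓ Submodule.span F {x} = ⊥ ∧ M ⊔ Submodule.span F {x} = H) ∨
        (∃ x y z : L, x ∈ H ∧ y ∈ H ∧ z ∈ H ∧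
          LinearIndependent F ![x, y, z] ∧ Submodule.span F {x, y, z} = H ∧
          m y x = z ∧ m x y = - z ∧ m x z = 0 ∧ m z x = 0 ∧ m y z = 0 ∧ m z y = 0 ∧
          m x x = 0 ∧ m y y = 0 ∧ m z z = 0)) ∧
    (∀ u ∈ mprod m H H, ∀ v ∈ mprod m H H, m u v = 0) ∧
    (∀ u ∈ mprod m H H, ∃ x n : L, u = m x n ∧ m n u = 0 ∧ m u n = 0 ∧
      x ∈ H ∧ m u (m x u) = 0 ∧ m (m x u) u = 0) := by
  set D := mprod m H H with hD
  have hDH : D ≤ H := by rw [hD, mprod_le_iff]; exact hH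
  -- every proper intermediate subspace is abelian
  have hab : ∀ B ≤ H, D ≤ B → B ≠ H → ∀ a ∈ B, ∀ b ∈ B, m a b = 0 := by
    intro B hB hDB hne a ha b hb
    have hid : IsIdealOf m H B := ⟨hB, fun x hx y hy =>
      ⟨hDB (mem_mprod hx (hB hy)), hDB (mem_mprod (hB hy) hx)⟩⟩
    have := g1 B hB (fun x hx y hy => (hid.2 x (hB hx) y hy).1) hne (mprod_self_ideal hm hid)
    have h2 := mem_mprod (m := m) ha hb
    rw [this] at h2
    simpa using h2
  have hDD : ∀ u ∈ D, ∀ v ∈ D, m u v = 0 := hab D hDH le_rfl g3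
  have hDid : IsIdealOf m H D := ⟨hDH, fun x hx y hy =>
      ⟨mem_mprod hx (hDH hy), mem_mprod (hDH hy) hx⟩⟩
  by_cases hc : ∃ x ∈ H, D ⊔ Submodule.span F {x} = H
  · obtain ⟨x, hx, hxs⟩ := hc
    have hxD : x ∉ D := by
      intro h
      apply g3
      rw [← hxs, eq_comm, sup_eq_left, Submodule.span_singleton_le_iff_mem]
      exact h
    have hdisj : D ⊓ Submodule.span F {x} = ⊥ := by
      rw [eq_bot_iff]
      rintro y ⟨hy1, hy2⟩
      obtain ⟨c, rfl⟩ := Submodule.mem_span_singleton.mp hy2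
      by_cases hc : c = 0
      · simp [hc]
      · exact absurd ((Submodule.smul_mem_iff D hc).mp hy1) hxD
    have hdec : ∀ h ∈ H, ∃ d ∈ D, ∃ c : F, h = d + c • x := by
      intro h hh
      rw [← hxs] at hh
      obtain ⟨d, hd, y, hy, rfl⟩ := Submodule.mem_sup.mp hh
      obtain ⟨c, rfl⟩ := Submodule.mem_span_singleton.mp hy
      exact ⟨d, hd, c, rfl⟩
    have hxx := halt x hx
    have hsurj : ∀ u ∈ D, ∃ n ∈ D, m x n = u := by
      intro u hu
      have : D ≤ D.map (m x) := by
        conv_lhs => rw [hD]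
        rw [mprod_le_iff]
        intro a ha b hb
        obtain ⟨d, hd, c, rfl⟩ := hdec a ha
        obtain ⟨d', hd', c', rfl⟩ := hdec b hb
        refine ⟨c • d' - c' • d, sub_mem (D.smul_mem _ hd') (D.smul_mem _ hd), ?_⟩
        simp [hDD d hd d' hd', hxx, hanti d (hDH hd) x hx]
        abel
      exact this hu
    have hinj : ∀ u ∈ D, m x u = 0 → u = 0 := by
      let f : D →ₗ[F] D := (m x).restrict (fun d hd => (hDid.2 x hx d hd).1)
      have hs : Function.Surjective f := by
        rintro ⟨u, hu⟩
        obtain ⟨n, hn, e⟩ := hsurj u hu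
        exact ⟨⟨n, hn⟩, Subtype.ext e⟩
      have hi := LinearMap.injective_iff_surjective.mpr hs
      intro u hu h0
      have : f ⟨u, hu⟩ = f 0 := by
        rw [map_zero]; exact Subtype.ext h0
      exact congrArg Subtype.val (hi this)
    refine ⟨Or.inl ⟨D, x, hDid, g3', ?_, hDD, hx, hdisj, hxs⟩, hDD, ?_⟩
    · intro J hJ hJD
      by_cases hJe : J = D
      · exact Or.inr hJe
      left
      set B := J ⊔ Submodule.span F {x} with hB
      have hBdec : ∀ h ∈ B, ∃ d ∈ J, ∃ c : F, h = d + c • x := by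
        intro h hh
        obtain ⟨d, hd, y, hy, rfl⟩ := Submodule.mem_sup.mp hh
        obtain ⟨c, rfl⟩ := Submodule.mem_span_singleton.mp hy
        exact ⟨d, hd, c, rfl⟩
      have hxB : x ∈ B := Submodule.mem_sup_right (Submodule.mem_span_singleton_self x)
      have hBH : B ≤ H := sup_le hJ.1 (by rw [Submodule.span_singleton_le_iff_mem]; exact hx)
      have hBJ : mprod m B B ≤ J := by
        rw [mprod_le_iff]
        intro a ha b hb
        obtain ⟨d, hd, c, rfl⟩ := hBdec a ha
        obtain ⟨d', hd', c', rfl⟩ := hBdec b hb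
        simp only [map_add, map_smul, LinearMap.add_apply, LinearMap.smul_apply, hxx,
          hDD d (hJD hd) d' (hJD hd')]
        have e1 := (hJ.2 x hx d hd).2
        have e2 := (hJ.2 x hx d' hd').1
        refine add_mem (add_mem (zero_mem _) (J.smul_mem _ e2)) (J.smul_mem _ (add_mem e1 ?_))
        simp
      have hJB : J ≤ B := le_sup_left
      have hne : B ≠ H := by
        intro h
        apply hJe
        refine le_antisymm hJD ?_
        intro d hd
        have : d ∈ B := by rw [h]; exact hDH hd
        obtain ⟨j, hj, c, rfl⟩ := hBdec d this
        have h2 : c • x ∈ D := by simpa using sub_mem hd (hJD hj)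
        by_cases hc : c = 0
        · simpa [hc] using hj
        · exact absurd ((Submodule.smul_mem_iff D hc).mp h2) hxD
      have hleft : ∀ h ∈ H, ∀ b ∈ mprod m B B, m h b ∈ mprod m B B := by
        intro h hh b hb
        obtain ⟨d, hd, c, rfl⟩ := hdec h hh
        simp only [map_add, map_smul, LinearMap.add_apply, LinearMap.smul_apply,
          hDD d hd b (hJD (hBJ hb)), zero_add]
        exact Submodule.smul_mem _ _ (mem_mprod hxB (hJB (hBJ hb)))
      have hz := g1 B hBH (fun a ha b hb => hJB (hBJ (mem_mprod ha hb))) hne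
        ⟨hBJ.trans hJ.1, fun h hh b hb => ⟨hleft h hh b hb, by
          rw [hanti b (hJ.1 (hBJ hb)) h hh]
          exact neg_mem (hleft h hh b hb)⟩⟩
      rw [eq_bot_iff]
      intro j hj
      have h2 := mem_mprod (m := m) hxB (hJB hj)
      rw [hz] at h2
      exact hinj j (hJD hj) (by simpa using h2)
    · intro u hu
      obtain ⟨n, hn, e⟩ := hsurj u hu
      have hxu := (hDid.2 x hx u hu).1
      exact ⟨x, n, e.symm, hDD _ hn _ hu, hDD _ hu _ hn, hx, hDD _ hu _ hxu, hDD _ hxu _ hu⟩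
  · push Not at hc
    have hcent : ∀ d ∈ D, ∀ h ∈ H, m d h = 0 ∧ m h d = 0 := by
      intro d hd h hh
      have := hab (D ⊔ Submodule.span F {h})
        (sup_le hDH (by rw [Submodule.span_singleton_le_iff_mem]; exact hh)) le_sup_left
        (hc h hh)
      have h1 : d ∈ D ⊔ Submodule.span F {h} := Submodule.mem_sup_left hd
      have h2 : h ∈ D ⊔ Submodule.span F {h} :=
        Submodule.mem_sup_right (Submodule.mem_span_singleton_self h)
      exact ⟨this _ h1 _ h2, this _ h2 _ h1⟩
    have hex : ∃ y ∈ H, ∃ x ∈ H, m y x ≠ 0 := by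
      by_contra hcon
      push Not at hcon
      apply g3'
      rw [eq_bot_iff, hD, mprod_le_iff]
      intro a ha b hb
      simpa using hcon a ha b hb
    obtain ⟨y, hy, x, hx, hz⟩ := hex
    set z := m y x with hzdef
    have hzD : z ∈ D := mem_mprod hy hx
    have hxy : m x y = - z := hanti x hx y hy
    have hzx := hcent z hzD x hx
    have hzy := hcent z hzD y hy
    have hzz := hcent z hzD z (hDH hzD)
    set B := Submodule.span F {x, y, z} with hB
    have hBH : B ≤ H := by
      rw [hB, Submodule.span_le]
      rintro w (rfl | rfl | rfl)
      · exact hx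
      · exact hy
      · exact hDH hzD
    have hxB : x ∈ B := Submodule.subset_span (by simp)
    have hyB : y ∈ B := Submodule.subset_span (by simp)
    have hzB : z ∈ B := Submodule.subset_span (by simp)
    have hBdec : ∀ b ∈ B, ∃ α β γ : F, b = α • x + β • y + γ • z := by
      intro b hb
      obtain ⟨α, β, γ, h⟩ := Submodule.mem_span_triple.mp hb
      exact ⟨α, β, γ, h.symm⟩
    have hBB : ∀ a ∈ B, ∀ b ∈ B, ∃ c : F, m a b = c • z ∧ ∃ w ∈ B, m a b = m y w := by
      intro a ha b hb
      obtain ⟨α, β, γ, rfl⟩ := hBdec a ha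
      obtain ⟨α', β', γ', rfl⟩ := hBdec b hb
      refine ⟨β * α' - α * β', ?_, (β * α' - α * β') • x, B.smul_mem _ hxB, ?_⟩
      · simp only [map_add, map_smul, LinearMap.add_apply, LinearMap.smul_apply, hxy, hzx.1, hzx.2,
          hzy.1, hzy.2, hzz.1, halt x hx, halt y hy, ← hzdef]
        module
      · simp only [map_add, map_smul, LinearMap.add_apply, LinearMap.smul_apply, hxy, hzx.1, hzx.2,
          hzy.1, hzy.2, hzz.1, halt x hx, halt y hy, ← hzdef]
        module
    have hBBD : mprod m B B ≤ D := mprod_mono hBH hBH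
    have hBeq : B = H := by
      by_contra hne
      have := g1 B hBH (fun a ha b hb => by
          obtain ⟨c, h, -⟩ := hBB a ha b hb
          rw [h]; exact B.smul_mem _ hzB) hne
        ⟨hBBD.trans hDH, fun h hh b hb => by
          have := hcent b (hBBD hb) h hh
          rw [this.1, this.2]; exact ⟨zero_mem _, zero_mem _⟩⟩
      have h2 := mem_mprod (m := m) hyB hxB
      rw [this] at h2
      exact hz (by simpa using h2)
    refine ⟨Or.inr ⟨x, y, z, hx, hy, hDH hzD, ?_, hBeq, rfl, hxy, hzx.2, hzx.1, hzy.2, hzy.1,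
      halt x hx, halt y hy, hzz.1⟩, hDD, ?_⟩
    · rw [Fintype.linearIndependent_iff]
      intro g hg
      rw [Fin.sum_univ_three] at hg
      change g 0 • x + g 1 • y + g 2 • z = 0 at hg
      have h0 : g 0 = 0 := by
        have := congrArg (m y) hg
        simp only [map_add, map_smul, ← hzdef, halt y hy, hzy.2, smul_zero, add_zero, map_zero] at this
        exact (smul_eq_zero.mp this).resolve_right hz
      have h1 : g 1 = 0 := by
        have := congrArg (m x) hg
        simp only [map_add, map_smul, hxy, halt x hx, hzx.2, smul_zero, add_zero, zero_add,
          map_zero, smul_neg, neg_eq_zero] at this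
        exact (smul_eq_zero.mp this).resolve_right hz
      have h2 : g 2 = 0 := by
        rw [h0, h1] at hg
        simp only [zero_smul, zero_add] at hg
        exact (smul_eq_zero.mp hg).resolve_right hz
      intro i
      fin_cases i
      · exact h0
      · exact h1
      · exact h2
    · intro u hu
      have hle : D ≤ Submodule.span F {z} := by
        rw [hD, mprod_le_iff, ← hBeq]
        intro a ha b hb
        obtain ⟨c, h, -⟩ := hBB a ha b hb
        rw [h]; exact Submodule.smul_mem _ _ (Submodule.mem_span_singleton_self z)
      obtain ⟨c, rfl⟩ := Submodule.mem_span_singleton.mp (hle hu)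
      have h0 := (hcent _ hu y hy).2
      refine ⟨y, c • x, by simp [hzdef], ?_, ?_, hy, by rw [h0, map_zero], ?_⟩
      · exact (hcent _ hu _ (H.smul_mem c hx)).2
      · exact (hcent _ hu _ (H.smul_mem c hx)).1
      · rw [h0]; simp

/-- Iterated action. -/
def itAct (m : L →ₗ[F] L →ₗ[F] L) (B A : Submodule F L) : ℕ → Submodule F L
  | 0 => A
  | k + 1 => mprod m B (itAct m B A k)

theorem itAct_mono {B B' A : Submodule F L} (h : B ≤ B') (k : ℕ) :
    itAct m B A k ≤ itAct m B' A k := by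
  induction k with
  | zero => exact le_rfl
  | succ k ih => exact mprod_mono h ih

theorem exists_minIdeal [FiniteDimensional F L] (I : Submodule F L) (hI : IsIdeal m I)
    (hne : I ≠ ⊥) : ∃ A, IsMinIdeal m A ∧ A ≤ I := by
  obtain ⟨A, ⟨h1, h2, h3⟩, hmin⟩ := (wellFounded_lt (α := Submodule F L)).has_min
    {J | IsIdeal m J ∧ J ≠ ⊥ ∧ J ≤ I} ⟨I, hI, hne, le_rfl⟩
  refine ⟨A, ⟨h1, h2, fun J hJ hJA => ?_⟩, h3⟩
  by_cases h : J = ⊥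
  · exact Or.inl h
  · right
    by_contra hcon
    exact hmin J ⟨hJ, h, hJA.trans h3⟩ (lt_of_le_of_ne hJA hcon)

theorem minIdeal_compl (hm : IsLeibniz m) (hsolv : IsSolvableAlg m)
    (hphi : frattiniIdeal m = ⊥) (A : Submodule F L) (hA : IsMinIdeal m A) :
    (∀ a ∈ A, ∀ b ∈ A, m a b = 0) ∧
    ∃ H, IsSubalg m H ∧ A ⊓ H = ⊥ ∧ A ⊔ H = ⊤ ∧ H ≠ ⊤ := by
  obtain ⟨hAi, hAne, hAmin⟩ := hA
  have hAA : ∀ a ∈ A, ∀ b ∈ A, m a b = 0 := by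
    have hid := isIdeal_iff_top.mpr (mprod_self_ideal hm (isIdeal_iff_top.mp hAi))
    have hle : mprod m A A ≤ A := by
      rw [mprod_le_iff]; exact fun x _ y hy => (hAi x y hy).1
    rcases hAmin _ hid hle with h | h
    · intro a ha b hb
      have := mem_mprod (m := m) ha hb
      rw [h] at this; simpa using this
    · exfalso
      obtain ⟨n, hn⟩ := hsolv
      have : ∀ k, A ≤ derSeries m ⊤ k := by
        intro k
        induction k with
        | zero => exact le_top
        | succ k ih =>
          calc A = mprod m A A := h.symm
            _ ≤ _ := mprod_mono ih ih
      exact hAne (le_bot_iff.mp ((this n).trans hn.le))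
  refine ⟨hAA, ?_⟩
  have hnot : ¬ A ≤ frattiniSub m := by
    intro h
    apply hAne
    rw [← le_bot_iff, ← hphi]
    exact le_sSup ⟨hAi, h⟩
  have : ∃ H, IsMaxSubalg m H ∧ ¬ A ≤ H := by
    by_contra hcon
    push Not at hcon
    exact hnot (le_sInf fun S hS => hcon S hS)
  obtain ⟨H, ⟨hH, hHtop, hHmax⟩, hAH⟩ := this
  have hsup : A ⊔ H = ⊤ := by
    have hs : IsSubalg m (A ⊔ H) := by
      intro x hx y hy
      obtain ⟨a, ha, h, hh, rfl⟩ := Submodule.mem_sup.mp hx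
      obtain ⟨a', ha', h', hh', rfl⟩ := Submodule.mem_sup.mp hy
      simp only [map_add, LinearMap.add_apply]
      exact add_mem (add_mem (Submodule.mem_sup_left (hAi _ _ ha').1)
        (Submodule.mem_sup_left (hAi _ _ ha').1))
        (add_mem (Submodule.mem_sup_left (hAi _ _ ha).2) (Submodule.mem_sup_right (hH _ hh _ hh')))
    rcases hHmax (A ⊔ H) hs le_sup_right with h | h
    · exact absurd (sup_eq_right.mp h) hAH
    · exact h
  refine ⟨H, hH, ?_, hsup, hHtop⟩
  have hid : IsIdeal m (A ⊓ H) := by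
    rintro x y ⟨hyA, hyH⟩
    have hx : x ∈ A ⊔ H := by rw [hsup]; trivial
    obtain ⟨a, ha, h, hh, rfl⟩ := Submodule.mem_sup.mp hx
    simp only [map_add, LinearMap.add_apply, hAA a ha y hyA, hAA y hyA a ha, zero_add]
    exact ⟨⟨(hAi _ _ hyA).1, hH _ hh _ hyH⟩, ⟨(hAi _ _ hyA).2, hH _ hyH _ hh⟩⟩
  rcases hAmin (A ⊓ H) hid inf_le_left with h | h
  · exact h
  · exact absurd (inf_eq_left.mp h) hAH

theorem lc_le (A H : Submodule F L) (hAi : IsIdeal m A) (hsup : A ⊔ H = ⊤) (k : ℕ) :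
    lcSeries m (mprod m ⊤ ⊤) k ≤ A ⊔ lcSeries m (mprod m H H) k := by
  have key : ∀ P Q : Submodule F L, mprod m (A ⊔ P) (A ⊔ Q) ≤ A ⊔ mprod m P Q := by
    intro P Q
    rw [mprod_le_iff]
    intro x hx y hy
    obtain ⟨a, ha, h, hh, rfl⟩ := Submodule.mem_sup.mp hx
    obtain ⟨a', ha', h', hh', rfl⟩ := Submodule.mem_sup.mp hy
    simp only [map_add, LinearMap.add_apply]
    exact add_mem (add_mem (Submodule.mem_sup_left (hAi _ _ ha').1)
        (Submodule.mem_sup_left (hAi _ _ ha').1))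
        (add_mem (Submodule.mem_sup_left (hAi _ _ ha).2)
          (Submodule.mem_sup_right (mem_mprod hh hh')))
  have h0 : mprod m ⊤ ⊤ ≤ A ⊔ mprod m H H := by
    have := key H H
    rwa [hsup] at this
  induction k with
  | zero => exact h0
  | succ k ih => exact (mprod_mono h0 ih).trans (key _ _)

theorem lc_antitone (k : ℕ) :
    lcSeries m (mprod m ⊤ ⊤) (k + 1) ≤ lcSeries m (mprod m ⊤ ⊤) k := by
  induction k with
  | zero => exact mprod_mono le_top le_top
  | succ k ih => exact mprod_mono le_rfl ih

theorem leib_left (hm : IsLeibniz m) : ∀ a ∈ leibIdeal m, ∀ u, m a u = 0 := by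
  intro a ha u
  have : leibIdeal m ≤ LinearMap.ker (m.flip u) := by
    rw [leibIdeal, Submodule.span_le]
    rintro _ ⟨x, rfl⟩
    have := hm x x u
    simpa using this
  exact this ha

theorem leib_ideal (hm : IsLeibniz m) : IsIdeal m (leibIdeal m) := by
  intro x y hy
  refine ⟨?_, by rw [leib_left hm y hy]; exact zero_mem _⟩
  have hsq : ∀ w, m w w ∈ leibIdeal m := fun w => Submodule.subset_span ⟨w, rfl⟩
  have : leibIdeal m ≤ (leibIdeal m).comap (m x) := by
    conv_lhs => rw [leibIdeal]
    rw [Submodule.span_le]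
    rintro _ ⟨w, rfl⟩
    have e : m x (m w w) = m (m x w + w) (m x w + w) - m (m x w) (m x w) - m w w := by
      rw [hm]; simp only [map_add, LinearMap.add_apply]; abel
    change m x (m w w) ∈ leibIdeal m
    rw [e]
    exact sub_mem (sub_mem (hsq _) (hsq _)) (hsq _)
  exact this hy

/-- commuting nilpotents have a common kernel vector -/
theorem common_kernel [FiniteDimensional F L] (D A : Submodule F L) (hA : A ≠ ⊥)
    (hinv : ∀ u ∈ D, ∀ a ∈ A, m u a ∈ A)
    (hcomm : ∀ u ∈ D, ∀ v ∈ D, ∀ a, m u (m v a) = m v (m u a))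
    (hnil : ∀ u ∈ D, IsNilpotent (m u : Module.End F L)) :
    ∃ a ∈ A, a ≠ 0 ∧ ∀ u ∈ D, m u a = 0 := by
  obtain ⟨W, ⟨h1, h2, h3⟩, hmin⟩ := (wellFounded_lt (α := Submodule F L)).has_min
    {W | W ≤ A ∧ W ≠ ⊥ ∧ ∀ u ∈ D, ∀ a ∈ W, m u a ∈ W} ⟨A, le_rfl, hA, hinv⟩
  obtain ⟨a, ha, ha0⟩ := Submodule.exists_mem_ne_zero_of_ne_bot h2
  refine ⟨a, h1 ha, ha0, fun u hu => ?_⟩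
  by_contra hua
  refine hmin (W ⊓ LinearMap.ker (m u)) ⟨inf_le_left.trans h1, ?_, ?_⟩ ?_
  · intro hbot
    have hz : ∀ k : ℕ, ((m u : Module.End F L) ^ k) a ∈ W ∧ ((m u : Module.End F L) ^ k) a ≠ 0 := by
      intro k
      induction k with
      | zero => exact ⟨by simpa using ha, by simpa using ha0⟩
      | succ k ih =>
        rw [pow_succ']
        refine ⟨h3 u hu _ ih.1, fun h0 => ih.2 ?_⟩
        have : ((m u : Module.End F L) ^ k) a ∈ W ⊓ LinearMap.ker (m u) := ⟨ih.1, h0⟩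
        rw [hbot] at this
        simpa using this
    obtain ⟨k, hk⟩ := hnil u hu
    exact (hz k).2 (by rw [hk]; rfl)
  · rintro v hv b ⟨hb1, hb2⟩
    refine ⟨h3 v hv b hb1, ?_⟩
    have hb2' : m u b = 0 := hb2
    change m u (m v b) = 0
    rw [hcomm u hu v hv, hb2', map_zero]
  · refine lt_of_le_of_ne inf_le_left fun h => hua ?_
    rw [inf_eq_left] at h
    exact h ha

end Helpers

/-- Let `L` be a finite-dimensional solvable Leibniz algebra over a
field `F` with `φ(L) = 0` which is minimally non-strongly-solvable. Then `F` has
characteristic `p > 0`, and `L = A + H` is a semidirect sum where (1) `A` is the unique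
minimal ideal of `L`, (2) `dim A ≥ 2`, (3) `A·A = 0`, and (4) either `H = M ∔ Fx` with
`M` a minimal abelian ideal of `H`, or `H` is the three-dimensional Heisenberg algebra.
Moreover, either `L` is a Lie algebra, or else `H` is a Lie algebra, `A = Leib(L)`, and
`A·L = 0`. -/
theorem minimally_non_strongly_solvable_structure
    {F : Type*} [Field F] {L : Type*} [AddCommGroup L] [Module F L]
    [FiniteDimensional F L]
    (m : L →ₗ[F] L →ₗ[F] L) (hm : IsLeibniz m)
    (hsolv : IsSolvableAlg m)
    (hphi : frattiniIdeal m = ⊥)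
    (hnotss : ¬ IsStronglySolvable m (⊤ : Submodule F L))
    (hproper : ∀ S : Submodule F L, IsSubalg m S → S ≠ ⊤ → IsStronglySolvable m S) :
    (∃ p : ℕ, p ≠ 0 ∧ CharP F p) ∧
    ∃ A H : Submodule F L,
      IsMinIdeal m A ∧ (∀ A', IsMinIdeal m A' → A' = A) ∧
      IsSubalg m H ∧ A ⊓ H = ⊥ ∧ A ⊔ H = ⊤ ∧
      2 ≤ Module.finrank F A ∧
      (∀ a ∈ A, ∀ b ∈ A, m a b = 0) ∧
      ((∃ (M : Submodule F L) (x : L),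
          IsIdealOf m H M ∧ M ≠ ⊥ ∧
          (∀ J, IsIdealOf m H J → J ≤ M → J = ⊥ ∨ J = M) ∧
          (∀ a ∈ M, ∀ b ∈ M, m a b = 0) ∧
          x ∈ H ∧ M ⊓ Submodule.span F {x} = ⊥ ∧ M ⊔ Submodule.span F {x} = H) ∨
        (∃ x y z : L, x ∈ H ∧ y ∈ H ∧ z ∈ H ∧
          LinearIndependent F ![x, y, z] ∧ Submodule.span F {x, y, z} = H ∧
          m y x = z ∧ m x y = - z ∧ m x z = 0 ∧ m z x = 0 ∧ m y z = 0 ∧ m z y = 0 ∧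
          m x x = 0 ∧ m y y = 0 ∧ m z z = 0)) ∧
      (IsLie m ∨
        ((∀ h ∈ H, ∀ k ∈ H, m h k = - m k h) ∧ A = leibIdeal m ∧
          (∀ a ∈ A, ∀ u : L, m a u = 0))) := by
  have hLne : (⊤ : Submodule F L) ≠ ⊥ := by
    intro h
    apply hnotss
    refine ⟨0, ?_⟩
    rw [← le_bot_iff, ← h]; exact le_top
  obtain ⟨A, hA, -⟩ := exists_minIdeal (m := m) ⊤ (fun _ _ _ => ⟨trivial, trivial⟩) hLne
  obtain ⟨hAA, H, hH, hinf, hsup, hHtop⟩ := minIdeal_compl hm hsolv hphi A hA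
  have hAi := hA.1
  -- lower central series eventually lies in any minimal ideal
  have hlc : ∀ A', IsMinIdeal m A' → ∃ k, lcSeries m (mprod m ⊤ ⊤) k ≤ A' := by
    intro A' hA'
    obtain ⟨-, H', hH', -, hsup', hne'⟩ := minIdeal_compl hm hsolv hphi A' hA'
    obtain ⟨k, hk⟩ := hproper H' hH' hne'
    refine ⟨k, (lc_le A' H' hA'.1 hsup' k).trans ?_⟩
    rw [hk, sup_bot_eq]
  have huniq : ∀ A', IsMinIdeal m A' → A' = A := by
    intro A' hA'
    by_contra hne
    obtain ⟨k, hk⟩ := hlc A hA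
    obtain ⟨k', hk'⟩ := hlc A' hA'
    have hanti : Antitone (lcSeries m (mprod m ⊤ ⊤)) := antitone_nat_of_succ_le lc_antitone
    apply hnotss
    refine ⟨max k k', ?_⟩
    have hle := le_inf ((hanti (le_max_left k k')).trans hk) ((hanti (le_max_right k k')).trans hk')
    have hid : IsIdeal m (A ⊓ A') := fun x y hy =>
      ⟨⟨(hAi x y hy.1).1, (hA'.1 x y hy.2).1⟩, ⟨(hAi x y hy.1).2, (hA'.1 x y hy.2).2⟩⟩
    rcases hA.2.2 _ hid inf_le_left with h | h
    · rwa [h, le_bot_iff] at hle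
    · rcases hA'.2.2 _ hid inf_le_right with h' | h'
      · rwa [h', le_bot_iff] at hle
      · exact absurd (h'.symm.trans h) hne
  have hAnH : ¬ A ≤ H := by
    intro h
    apply hA.2.1
    rw [← hinf]; exact (inf_eq_left.mpr h).symm
  have hnoid : ∀ I ≤ H, IsIdeal m I → I = ⊥ := by
    intro I hI hid
    by_contra hne
    obtain ⟨A', hA', hle⟩ := exists_minIdeal I hid hne
    rw [huniq A' hA'] at hle
    exact hAnH (hle.trans hI)
  have hdec : ∀ x : L, ∃ a ∈ A, ∃ h ∈ H, x = a + h := by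
    intro x
    have hx : x ∈ A ⊔ H := by rw [hsup]; trivial
    obtain ⟨a, ha, h, hh, rfl⟩ := Submodule.mem_sup.mp hx
    exact ⟨a, ha, h, hh, rfl⟩
  -- dichotomy
  have hR0 : (leibIdeal m = ⊥ ∧ ∀ x, m x x = 0) ∨
      (A ≤ leibIdeal m ∧ ∀ a ∈ A, ∀ u, m a u = 0) := by
    by_cases h : leibIdeal m = ⊥
    · refine Or.inl ⟨h, fun x => ?_⟩
      have : m x x ∈ leibIdeal m := Submodule.subset_span ⟨x, rfl⟩
      rw [h] at this; simpa using this
    · right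
      obtain ⟨A', hA', hle⟩ := exists_minIdeal _ (leib_ideal hm) h
      rw [huniq A' hA'] at hle
      exact ⟨hle, fun a ha => leib_left hm a (hle ha)⟩
  have halt_anti : ∀ S : Submodule F L, (∀ x ∈ S, m x x = 0) →
      ∀ a ∈ S, ∀ b ∈ S, m a b = - m b a := by
    intro S h a ha b hb
    have := h (a + b) (add_mem ha hb)
    simp only [map_add, LinearMap.add_apply, h a ha, h b hb, zero_add, add_zero] at this
    exact eq_neg_of_add_eq_zero_right this
  have hR : (∀ a ∈ A, ∀ u, m a u = 0) ∨ (∀ a b, m a b = - m b a) := by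
    rcases hR0 with ⟨-, h⟩ | ⟨-, h⟩
    · exact Or.inr fun a b => halt_anti ⊤ (fun x _ => h x) a trivial b trivial
    · exact Or.inl h
  have hrep : ∀ h k a, m (m h k) a = m h (m k a) - m k (m h a) := by
    intro h k a; rw [hm h k a]; abel
  -- faithful
  have hfaith : ∀ I, IsIdealOf m H I → (∀ u ∈ I, ∀ a ∈ A, m u a = 0) → I = ⊥ := by
    intro I hI h0
    refine hnoid I hI.1 ?_
    intro x y hy
    obtain ⟨a, ha, h, hh, rfl⟩ := hdec x
    have hya := h0 y hy a ha
    have hay : m a y = 0 := by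
      rcases hR with hR | hR
      · exact hR a ha y
      · rw [hR, hya, neg_zero]
    simp only [map_add, LinearMap.add_apply, hya, hay, zero_add]
    exact hI.2 h hh y hy
  -- irreducible
  have hirr : ∀ J ≤ A, (∀ h ∈ H, ∀ j ∈ J, m h j ∈ J) → J = ⊥ ∨ J = A := by
    intro J hJ hinv
    refine hA.2.2 J ?_ hJ
    intro x y hy
    obtain ⟨a, ha, h, hh, rfl⟩ := hdec x
    simp only [map_add, LinearMap.add_apply, hAA a ha y (hJ hy), hAA y (hJ hy) a ha, zero_add]
    refine ⟨hinv h hh y hy, ?_⟩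
    rcases hR with hR | hR
    · rw [hR y (hJ hy)]; exact zero_mem _
    · rw [hR]; exact neg_mem (hinv h hh y hy)
  have hAlt : ∀ h ∈ H, m h h = 0 := by
    rcases hR0 with ⟨-, h⟩ | ⟨hle, h⟩
    · exact fun x _ => h x
    · have hb : leibIdeal m ⊓ H = ⊥ := by
        refine hfaith _ ⟨inf_le_right, fun x hx y hy => ⟨⟨(leib_ideal hm x y hy.1).1,
          hH _ hx _ hy.2⟩, ⟨(leib_ideal hm x y hy.1).2, hH _ hy.2 _ hx⟩⟩⟩ ?_
        exact fun u hu a _ => leib_left hm u hu.1 a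
      intro x hx
      have : m x x ∈ leibIdeal m ⊓ H := ⟨Submodule.subset_span ⟨x, rfl⟩, hH x hx x hx⟩
      rw [hb] at this; simpa using this
  have hAnti := halt_anti H hAlt
  have hHss := hproper H hH hHtop
  -- nilpotent action facts
  have F1 : ∀ B ≤ H, IsSubalg m B → B ≠ H → ∃ k, itAct m (mprod m B B) A k = ⊥ := by
    intro B hB hBs hne
    have hsub : IsSubalg m (A ⊔ B) := by
      intro x hx y hy
      obtain ⟨a, ha, h, hh, rfl⟩ := Submodule.mem_sup.mp hx
      obtain ⟨a', ha', h', hh', rfl⟩ := Submodule.mem_sup.mp hy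
      simp only [map_add, LinearMap.add_apply]
      exact add_mem (add_mem (Submodule.mem_sup_left (hAi _ _ ha').1)
        (Submodule.mem_sup_left (hAi _ _ ha').1))
        (add_mem (Submodule.mem_sup_left (hAi _ _ ha).2)
          (Submodule.mem_sup_right (hBs _ hh _ hh')))
    have hnt : A ⊔ B ≠ ⊤ := by
      intro h
      apply hne
      refine le_antisymm hB fun x hx => ?_
      have hx' : x ∈ A ⊔ B := by rw [h]; trivial
      obtain ⟨a, ha, b, hb, rfl⟩ := Submodule.mem_sup.mp hx'
      have : a ∈ A ⊓ H := ⟨ha, by simpa using sub_mem hx (hB hb)⟩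
      rw [hinf] at this
      have h0 : a = 0 := by simpa using this
      simpa [h0] using hb
    obtain ⟨k, hk⟩ := hproper _ hsub hnt
    have hBle : mprod m B B ≤ B := by rw [mprod_le_iff]; exact hBs
    have : ∀ k, itAct m (mprod m B B) A (k + 1) ≤ lcSeries m (mprod m (A ⊔ B) (A ⊔ B)) k := by
      intro k
      induction k with
      | zero => exact mprod_mono (hBle.trans le_sup_right) le_sup_left
      | succ k ih => exact mprod_mono (mprod_mono le_sup_right le_sup_right) ih
    exact ⟨k + 1, le_bot_iff.mp ((this k).trans hk.le)⟩
  have F2 : ¬ ∃ k, itAct m (mprod m H H) A k = ⊥ := by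
    rintro ⟨k, hk⟩
    obtain ⟨j, hj⟩ := hHss
    have h0 : mprod m ⊤ ⊤ ≤ A ⊔ mprod m H H := lc_le A H hAi hsup 0
    have hin : ∀ i, itAct m (mprod m H H) A i ≤ A := by
      intro i
      induction i with
      | zero => exact le_rfl
      | succ i ih =>
        refine mprod_le_iff.mpr fun x _ y hy => (hAi x y (ih hy)).1
    have : ∀ i, lcSeries m (mprod m ⊤ ⊤) (j + i) ≤ itAct m (mprod m H H) A i := by
      intro i
      induction i with
      | zero =>
        refine (lc_le A H hAi hsup j).trans ?_
        rw [hj, sup_bot_eq]; exact le_rfl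
      | succ i ih =>
        refine (mprod_mono h0 ih).trans ?_
        rw [mprod_le_iff]
        intro x hx y hy
        obtain ⟨a, ha, h, hh, rfl⟩ := Submodule.mem_sup.mp hx
        simp only [map_add, LinearMap.add_apply, hAA a ha y (hin i hy), zero_add]
        exact mem_mprod hh hy
    exact hnotss ⟨j + k, le_bot_iff.mp ((this k).trans hk.le)⟩
  have F3 : ∀ I, IsIdealOf m H I → (∃ k, itAct m I A k = ⊥) → I = ⊥ := by
    rintro I hI ⟨k, hk⟩
    refine hfaith I hI ?_
    have hle : mprod m I A ≤ A := mprod_le_iff.mpr fun x _ y hy => (hAi x y hy).1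
    rcases hirr _ hle (fun h hh => mprod_invol hm (fun p hp => (hI.2 h hh p hp).1)
      (fun a ha => (hAi h a ha).1)) with h | h
    · intro u hu a ha
      have := mem_mprod (m := m) hu ha
      rw [h] at this; simpa using this
    · exfalso
      have : ∀ i, itAct m I A i = A := by
        intro i
        induction i with
        | zero => rfl
        | succ i ih => change mprod m I (itAct m I A i) = A; rw [ih, h]
      exact hA.2.1 ((this k).symm.trans hk)
  have hbotit : itAct m ⊥ A 1 = ⊥ := Submodule.map₂_bot_left m _
  have g3' : mprod m H H ≠ ⊥ := by
    intro h
    exact F2 ⟨1, by rw [h]; exact hbotit⟩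
  have g3 : mprod m H H ≠ H := by
    intro h
    obtain ⟨k, hk⟩ := hHss
    have : ∀ i, lcSeries m (mprod m H H) i = H := by
      intro i
      induction i with
      | zero => exact h
      | succ i ih =>
        change mprod m (mprod m H H) (lcSeries m (mprod m H H) i) = H
        rw [ih, h, h]
    apply g3'
    rw [h, ← this k, hk]
  have hHD : IsIdealOf m H (mprod m H H) :=
    mprod_self_ideal hm ⟨le_rfl, fun x hx y hy => ⟨hH x hx y hy, hH y hy x hx⟩⟩
  obtain ⟨hstr, hDD, hgen⟩ := H_structure hm H hH hAlt hAnti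
    (fun B hB hBs hne hid => F3 _ hid (F1 B hB hBs hne)) g3 g3'
  refine ⟨?_, A, H, hA, huniq, hH, hinf, hsup, ?_, hAA, hstr, ?_⟩
  · obtain ⟨p, hp⟩ := CharP.exists F
    refine ⟨p, ?_, hp⟩
    rintro rfl
    have : CharZero F := CharP.charP_to_charZero F
    have hcommop : ∀ u v : L, m u v = 0 →
        ∀ a, m u (m v a) = m v (m u a) := by
      intro u v h a
      have := hrep u v a
      rw [h] at this
      simpa using (sub_eq_zero.mp (by simpa using this.symm))
    have hnil : ∀ u ∈ mprod m H H, IsNilpotent (m u : Module.End F L) := by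
      intro u hu
      obtain ⟨x, n, h1, h2, -, -, h3, -⟩ := hgen u hu
      have hbr : ∀ s t : L, (m s : Module.End F L) * m t - m t * m s = m (m s t) := by
        intro s t
        ext a
        simp [hrep]
      refine nilp_of_comm (F := F) (m x : Module.End F L) (m n) (m u) ?_ ?_ ?_
      · rw [hbr, ← h1]
      · ext a; exact hcommop _ _ h2 a
      · rw [hbr]; ext a; exact hcommop _ _ h3 a
    obtain ⟨a, ha, ha0, hker⟩ := common_kernel (mprod m H H) A hA.2.1
      (fun u _ a ha => (hAi u a ha).1) (fun u hu v hv => hcommop u v (hDD u hu v hv)) hnil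
    let W : Submodule F L :=
      { carrier := {a | a ∈ A ∧ ∀ u ∈ mprod m H H, m u a = 0}
        add_mem' := fun {a b} h h' => ⟨add_mem h.1 h'.1, fun u hu => by
          rw [map_add, h.2 u hu, h'.2 u hu, add_zero]⟩
        zero_mem' := ⟨zero_mem _, fun u _ => map_zero _⟩
        smul_mem' := fun c a h => ⟨A.smul_mem c h.1, fun u hu => by
          rw [map_smul, h.2 u hu, smul_zero]⟩ }
    have hWA : W ≤ A := fun a h => h.1
    rcases hirr W hWA (fun h hh j hj => ⟨(hAi h j hj.1).1, fun u hu => by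
        have e := hrep u h j
        rw [hj.2 _ (hHD.2 h hh u hu).2, hj.2 u hu, map_zero, sub_zero] at e
        exact e.symm⟩) with h | h
    · have : a ∈ W := ⟨ha, hker⟩
      rw [h] at this
      exact ha0 (by simpa using this)
    · apply g3'
      refine hfaith _ hHD fun u hu b hb => ?_
      rw [← h] at hb
      exact hb.2 u hu
  · by_contra hlt
    push Not at hlt
    have hA0 : Module.finrank F A ≠ 0 := fun h => hA.2.1 (Submodule.finrank_eq_zero.mp h)
    have h1 : Module.finrank F A = 1 := by omega
    obtain ⟨⟨v, hv⟩, hv0, hvs⟩ := finrank_eq_one_iff'.mp h1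
    have hsc : ∀ a ∈ A, ∃ c : F, a = c • v := by
      intro a ha
      obtain ⟨c, hc⟩ := hvs ⟨a, ha⟩
      exact ⟨c, (congrArg Subtype.val hc).symm⟩
    apply F2
    refine ⟨1, ?_⟩
    change mprod m (mprod m H H) A = ⊥
    rw [eq_bot_iff, mprod_le_iff]
    intro x hx a ha
    have : mprod m H H ≤ LinearMap.ker (m.flip a) := by
      rw [mprod_le_iff]
      intro h _ k _
      obtain ⟨c, rfl⟩ := hsc a ha
      obtain ⟨α, hα⟩ := hsc _ (hAi h v hv).1
      obtain ⟨β, hβ⟩ := hsc _ (hAi k v hv).1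
      change m (m h k) (c • v) = 0
      rw [map_smul, hrep, hβ, hα, map_smul, map_smul, hα, hβ]
      module
    simpa using this hx
  · rcases hR0 with ⟨-, h⟩ | ⟨hle, h⟩
    · exact Or.inl fun a b => halt_anti ⊤ (fun x _ => h x) a trivial b trivial
    · refine Or.inr ⟨hAnti, le_antisymm hle ?_, h⟩
      intro x hx
      obtain ⟨a, ha, k, hk, rfl⟩ := hdec x
      have hb : leibIdeal m ⊓ H = ⊥ := by
        refine hfaith _ ⟨inf_le_right, fun x hx y hy => ⟨⟨(leib_ideal hm x y hy.1).1,
          hH _ hx _ hy.2⟩, ⟨(leib_ideal hm x y hy.1).2, hH _ hy.2 _ hx⟩⟩⟩ ?_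
        exact fun u hu a _ => leib_left hm u hu.1 a
      have : k ∈ leibIdeal m ⊓ H := ⟨by simpa using sub_mem hx (hle ha), hk⟩
      rw [hb] at this
      have h0 : k = 0 := by simpa using this
      simpa [h0] using ha
end

section
/- Let L be a finite-dimensional solvable Leibniz algebra over a field F such that every two-generated proper subalgebra of L is strongly solvable. Then L is either strongly solvable or two-generated. -/
/-!
Basic theory of (left) Leibniz algebras, formalized over an arbitrary field `F`.
A Leibniz algebra structure on an `F`-vector space `L` is given by a bilinear
multiplication `m : L →ₗ[F] L →ₗ[F] L` satisfying the left Leibniz identity.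
-/

open Submodule Module

section Aux

variable {F : Type*} [Field F] {L : Type*} [AddCommGroup L] [Module F L]

lemma aux_stab [FiniteDimensional F L] (W : ℕ → Submodule F L) (hW : ∀ n, W (n + 1) ≤ W n) :
    ∃ n, W n = W (n + 1) := by
  have ha : Antitone W := antitone_nat_of_succ_le hW
  obtain ⟨n, hn⟩ := IsArtinian.monotone_stabilizes (R := F) (M := L)
    ⟨fun n => OrderDual.toDual (W n), fun a b h => ha h⟩
  exact ⟨n, hn (n + 1) (Nat.le_succ n)⟩

/-- The key abelian-ideal lemma. -/
lemma aux_abelian [FiniteDimensional F L] (m : L →ₗ[F] L →ₗ[F] L) (hm : IsLeibniz m)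
    (hP : ∀ x y : L, ∃ k : ℕ, ((m (m x y)) ^ k : Module.End F L) x = 0 ∧
      ((m (m x y)) ^ k : Module.End F L) y = 0)
    (A : Submodule F L) (hA : IsIdeal m A) (hab : ∀ a ∈ A, ∀ b ∈ A, m a b = 0) (x y : L) :
    ∀ v ∈ A, ∃ k : ℕ, ((m (m x y)) ^ k : Module.End F L) v = 0 := by
  obtain ⟨f, hf⟩ : ∃ f : Module.End F L, f = m (m x y) := ⟨_, rfl⟩
  have hfA : ∀ v ∈ A, f v ∈ A := fun v hv => hf ▸ (hA _ v hv).1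
  obtain ⟨U, hU⟩ : ∃ U, U = sSup {W : Submodule F L | W ≤ A ∧ W ≤ W.map f} := ⟨_, rfl⟩
  have hUA : U ≤ A := by rw [hU]; exact sSup_le fun W hW => hW.1
  have hmax : ∀ W : Submodule F L, W ≤ A → W ≤ W.map f → W ≤ U := by
    intro W h1 h2; rw [hU]; exact le_sSup ⟨h1, h2⟩
  have hUf : U ≤ U.map f := by
    conv_lhs => rw [hU]
    exact sSup_le fun W hW => hW.2.trans (Submodule.map_mono (hmax W hW.1 hW.2))
  have hfU : U.map f ≤ U := by
    apply hmax
    · rintro _ ⟨v, hv, rfl⟩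
      exact hfA v (hUA hv)
    · exact Submodule.map_mono hUf
  have hfU' : ∀ u ∈ U, f u ∈ U := fun u hu => hfU ⟨u, hu, rfl⟩
  -- operators commuting with `f` up to operators preserving `U` preserve `U`
  have hgen : ∀ g : Module.End F L, (∀ a ∈ A, g a ∈ A) →
      (∀ u ∈ U, g (f u) - f (g u) ∈ U) → ∀ u ∈ U, g u ∈ U := by
    intro g hgA hg
    have : U ⊔ U.map g ≤ U := by
      apply hmax
      · refine sup_le hUA ?_
        rintro _ ⟨v, hv, rfl⟩
        exact hgA v (hUA hv)
      · refine sup_le (hUf.trans (Submodule.map_mono le_sup_left)) ?_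
        rintro _ ⟨v, hv, rfl⟩
        obtain ⟨u, hu, rfl⟩ := hUf hv
        have h1 : g (f u) = (g (f u) - f (g u)) + f (g u) := by abel
        rw [h1]
        refine add_mem ?_ ?_
        · exact (hUf.trans (Submodule.map_mono le_sup_left)) (hg u hu)
        · exact ⟨g u, Submodule.mem_sup_right ⟨u, hu, rfl⟩, rfl⟩
    intro u hu
    exact this (Submodule.mem_sup_right ⟨u, hu, rfl⟩)
  have hleft : ∀ k : ℕ, ∀ z : L, (f ^ k) z = 0 → ∀ u ∈ U, m z u ∈ U := by
    intro k
    induction k with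
    | zero => intro z hz u hu; simp at hz; simp [hz]
    | succ k ih =>
      intro z hz
      apply hgen (m z) (fun a ha => (hA z a ha).1)
      intro u hu
      have h1 := ih (f z) (by rw [pow_succ] at hz; exact hz) u hu
      have h2 : m z (f u) - f (m z u) = - m (f z) u := by
        rw [hf, hm (m x y) z u]; abel
      rw [h2]
      exact neg_mem h1
  have hright : ∀ k : ℕ, ∀ z : L, (f ^ k) z = 0 → ∀ u ∈ U, m u z ∈ U := by
    intro k
    induction k with
    | zero => intro z hz u hu; simp at hz; simp [hz]
    | succ k ih =>
      intro z hz
      apply hgen (m.flip z) (fun a ha => (hA z a ha).2)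
      intro u hu
      have h1 := ih (f z) (by rw [pow_succ] at hz; exact hz) u hu
      have h2 : m.flip z (f u) - f (m.flip z u) = - m u (f z) := by
        simp only [LinearMap.flip_apply]
        rw [hf, hm (m x y) u z]; abel
      rw [h2]
      exact neg_mem h1
  obtain ⟨k, hkx, hky⟩ := hP x y
  rw [← hf] at hkx hky
  -- `f` is injective on `U`
  have hinj : ∀ u ∈ U, f u = 0 → u = 0 := by
    have hsurj : Function.Surjective (f.restrict hfU') := by
      rintro ⟨v, hv⟩
      obtain ⟨u, hu, rfl⟩ := hUf hv
      exact ⟨⟨u, hu⟩, rfl⟩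
    have hi := LinearMap.injective_iff_surjective.2 hsurj
    intro u hu h0
    have := @hi ⟨u, hu⟩ 0 (by ext; simpa using h0)
    simpa using congrArg Subtype.val this
  have hinjk : ∀ k : ℕ, ∀ u ∈ U, (f ^ k) u = 0 → u = 0 := by
    intro k
    induction k with
    | zero => intro u _ h; simpa using h
    | succ k ih =>
      intro u hu h
      rw [pow_succ] at h
      exact hinj u hu (ih _ (hfU' u hu) h)
  have hUbot : U = ⊥ := by
    by_contra hne
    let T : (U × U) →ₗ[F] U :=
      LinearMap.codRestrict U
        ((m x).comp (U.subtype.comp (LinearMap.snd F U U)) +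
          (m.flip y).comp (U.subtype.comp (LinearMap.fst F U U)))
        (fun p => add_mem (hleft k x hkx _ p.2.2) (hright k y hky _ p.1.2))
    have hpos : 0 < Module.finrank F U := by
      rw [Module.finrank_pos_iff]
      exact (Submodule.nontrivial_iff_ne_bot).2 hne
    have hlt : Module.finrank F U < Module.finrank F (U × U) := by
      rw [Module.finrank_prod]; omega
    obtain ⟨⟨a, b⟩, hp, hp0⟩ := Submodule.exists_mem_ne_zero_of_ne_bot
      (LinearMap.ker_ne_bot_of_finrank_lt (f := T) hlt)
    have hT : m x b + m a y = 0 := congrArg Subtype.val (LinearMap.mem_ker.1 hp)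
    have hc : m (x + a) (y + b) = m x y := by
      have h0 := hab a (hUA a.2) b (hUA b.2)
      simp only [map_add, LinearMap.add_apply, h0]
      rw [add_zero]
      rw [add_assoc, add_comm (m a y), hT, add_zero]
    obtain ⟨j, hja, hjb⟩ := hP (x + a) (y + b)
    rw [hc, ← hf] at hja hjb
    have key : ∀ z : L, ∀ u ∈ U, (f ^ k) z = 0 → (f ^ j) (z + u) = 0 → u = 0 := by
      intro z u hu h1 h2
      apply hinjk (k + j) u hu
      have h3 : (f ^ (k + j)) (z + u) = 0 := by
        rw [pow_add, Module.End.mul_apply, h2, map_zero]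
      have h4 : (f ^ (k + j)) z = 0 := by
        rw [add_comm, pow_add, Module.End.mul_apply, h1, map_zero]
      rwa [map_add, h4, zero_add] at h3
    apply hp0
    have ha := key x a a.2 hkx hja
    have hb := key y b b.2 hky hjb
    ext
    · exact ha
    · exact hb
  -- conclude
  have hanti : ∀ n, A.map (f ^ (n + 1)) ≤ A.map (f ^ n) := by
    rintro n _ ⟨v, hv, rfl⟩
    exact ⟨f v, hfA v hv, by rw [pow_succ]; rfl⟩
  obtain ⟨n, hn⟩ := aux_stab (fun n => A.map (f ^ n)) hanti
  have hle : ∀ n, A.map (f ^ n) ≤ A := by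
    intro n
    induction n with
    | zero => rw [pow_zero]; rintro _ ⟨v, hv, rfl⟩; exact hv
    | succ n ih => exact (hanti n).trans ih
  have h1 : A.map (f ^ n) ≤ U := by
    apply hmax _ (hle n)
    rw [← Submodule.map_comp]
    have : f ∘ₗ (f ^ n) = f ^ (n + 1) := by rw [pow_succ']; rfl
    rw [this]
    exact le_of_eq hn
  intro v hv
  refine ⟨n, ?_⟩
  rw [← hf]
  have := h1 ⟨v, hv, rfl⟩
  rwa [hUbot, Submodule.mem_bot] at this

/-- The induced multiplication on a quotient. -/
def auxQuot (m : L →ₗ[F] L →ₗ[F] L) (J : Submodule F L) (hJ : IsIdeal m J) :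
    (L ⧸ J) →ₗ[F] (L ⧸ J) →ₗ[F] (L ⧸ J) :=
  J.liftQ
    { toFun := fun x => J.mapQ J (m x) (fun y hy => (hJ x y hy).1)
      map_add' := by
        intro a b
        ext y
        simp
      map_smul' := by
        intro a b
        ext y
        simp }
    (by
      intro x hx
      rw [LinearMap.mem_ker]
      ext y
      simpa using (hJ y x hx).2)

lemma auxQuot_mk (m : L →ₗ[F] L →ₗ[F] L) (J : Submodule F L) (hJ : IsIdeal m J) (x y : L) :
    auxQuot m J hJ (J.mkQ x) (J.mkQ y) = J.mkQ (m x y) := rfl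

lemma auxQuot_pow (m : L →ₗ[F] L →ₗ[F] L) (J : Submodule F L) (hJ : IsIdeal m J) (x y : L)
    (k : ℕ) :
    ((auxQuot m J hJ (J.mkQ x)) ^ k : Module.End F (L ⧸ J)) (J.mkQ y) =
      J.mkQ (((m x) ^ k : Module.End F L) y) := by
  induction k generalizing y with
  | zero => simp
  | succ k ih =>
    rw [pow_succ, pow_succ, Module.End.mul_apply, Module.End.mul_apply, auxQuot_mk, ih]

lemma aux_rel [FiniteDimensional F L] (m : L →ₗ[F] L →ₗ[F] L) (hm : IsLeibniz m)
    (hP : ∀ x y : L, ∃ k : ℕ, ((m (m x y)) ^ k : Module.End F L) x = 0 ∧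
      ((m (m x y)) ^ k : Module.End F L) y = 0)
    (A J : Submodule F L) (hA : IsIdeal m A) (hJ : IsIdeal m J)
    (hab : ∀ a ∈ A, ∀ b ∈ A, m a b ∈ J) (x y : L) :
    ∀ v ∈ A, ∃ k : ℕ, ((m (m x y)) ^ k : Module.End F L) v ∈ J := by
  intro v hv
  have hs := J.mkQ_surjective
  obtain ⟨k, hk⟩ := aux_abelian (auxQuot m J hJ) (by
      intro a b c
      obtain ⟨a, rfl⟩ := hs a
      obtain ⟨b, rfl⟩ := hs b
      obtain ⟨c, rfl⟩ := hs c
      simp only [auxQuot_mk]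
      rw [hm, map_add]) (by
      intro a b
      obtain ⟨a, rfl⟩ := hs a
      obtain ⟨b, rfl⟩ := hs b
      obtain ⟨k, h1, h2⟩ := hP a b
      refine ⟨k, ?_, ?_⟩
      · rw [auxQuot_mk, auxQuot_pow, h1, map_zero]
      · rw [auxQuot_mk, auxQuot_pow, h2, map_zero])
    (A.map J.mkQ) (by
      rintro z _ ⟨a, ha, rfl⟩
      obtain ⟨z, rfl⟩ := hs z
      simp only [auxQuot_mk]
      exact ⟨⟨_, (hA z a ha).1, rfl⟩, ⟨_, (hA z a ha).2, rfl⟩⟩) (by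
      rintro _ ⟨a, ha, rfl⟩ _ ⟨b, hb, rfl⟩
      rw [auxQuot_mk]
      simpa using hab a ha b hb) (J.mkQ x) (J.mkQ y) (J.mkQ v) ⟨v, hv, rfl⟩
  rw [auxQuot_mk, auxQuot_pow] at hk
  exact ⟨k, by simpa using hk⟩

lemma aux_ideal_mprod (m : L →ₗ[F] L →ₗ[F] L) (hm : IsLeibniz m) (I : Submodule F L)
    (hI : IsIdeal m I) : IsIdeal m (mprod m I I) := by
  intro x
  have h1 : mprod m I I ≤ (mprod m I I).comap (m x) := by
    refine Submodule.map₂_le.2 fun a ha b hb => ?_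
    rw [Submodule.mem_comap, hm]
    exact add_mem (Submodule.apply_mem_map₂ _ (hI x a ha).1 hb)
      (Submodule.apply_mem_map₂ _ ha (hI x b hb).1)
  have h2 : mprod m I I ≤ (mprod m I I).comap (m.flip x) := by
    refine Submodule.map₂_le.2 fun a ha b hb => ?_
    rw [Submodule.mem_comap, LinearMap.flip_apply]
    have h3 : m (m a b) x = m a (m b x) - m b (m a x) := by
      rw [hm a b x]; abel
    rw [h3]
    exact sub_mem (Submodule.apply_mem_map₂ _ ha (hI x b hb).2)
      (Submodule.apply_mem_map₂ _ hb (hI x a ha).2)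
  exact fun y hy => ⟨h1 hy, h2 hy⟩

lemma aux_ideal_der (m : L →ₗ[F] L →ₗ[F] L) (hm : IsLeibniz m) (n : ℕ) :
    IsIdeal m (derSeries m ⊤ n) := by
  induction n with
  | zero => exact fun x y _ => ⟨trivial, trivial⟩
  | succ n ih => exact aux_ideal_mprod m hm _ ih

lemma aux_nil [FiniteDimensional F L] (m : L →ₗ[F] L →ₗ[F] L) (hm : IsLeibniz m)
    (hsolv : IsSolvableAlg m)
    (hP : ∀ x y : L, ∃ k : ℕ, ((m (m x y)) ^ k : Module.End F L) x = 0 ∧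
      ((m (m x y)) ^ k : Module.End F L) y = 0) (x y : L) :
    IsNilpotent (m (m x y) : Module.End F L) := by
  rw [Module.End.isNilpotent_iff_of_finite]
  intro v
  obtain ⟨n, hn⟩ := hsolv
  have h : ∀ i : ℕ, ∃ k : ℕ, ((m (m x y)) ^ k : Module.End F L) v ∈ derSeries m ⊤ i := by
    intro i
    induction i with
    | zero => exact ⟨0, trivial⟩
    | succ i ih =>
      obtain ⟨k, hk⟩ := ih
      obtain ⟨j, hj⟩ := aux_rel m hm hP (derSeries m ⊤ i) (derSeries m ⊤ (i + 1))
        (aux_ideal_der m hm i) (aux_ideal_der m hm (i + 1))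
        (fun a ha b hb => Submodule.apply_mem_map₂ m ha hb) x y _ hk
      exact ⟨j + k, by rw [pow_add]; exact hj⟩
  obtain ⟨k, hk⟩ := h n
  rw [hn] at hk
  exact ⟨k, by simpa using hk⟩

/-- If `V ⊆ cV + U` with `c` nilpotent preserving `U`, then `V ⊆ U`. -/
lemma aux_nak (c : Module.End F L) (hc : IsNilpotent c) (V U : Submodule F L)
    (hU : ∀ u ∈ U, c u ∈ U) (h : V ≤ V.map c ⊔ U) : V ≤ U := by
  obtain ⟨n, hn⟩ := hc
  have : ∀ k, V ≤ V.map (c ^ k) ⊔ U := by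
    intro k
    induction k with
    | zero => rw [pow_zero]; exact fun v hv => Submodule.mem_sup_left ⟨v, hv, rfl⟩
    | succ k ih =>
      refine h.trans (sup_le ?_ le_sup_right)
      refine (Submodule.map_mono ih).trans ?_
      rw [Submodule.map_sup, ← Submodule.map_comp]
      refine sup_le_sup ?_ ?_
      · rw [pow_succ']; exact le_rfl
      · rintro _ ⟨u, hu, rfl⟩
        exact hU u hu
  have := this n
  rw [hn] at this
  simpa using this

/-- Relative nilpotent action of a subspace. -/
def AuxNilAct (m : L →ₗ[F] L →ₗ[F] L) (D : Submodule F L) : Prop :=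
  ∀ V U : Submodule F L, mprod m D U ≤ U → V ≤ mprod m D V ⊔ U → V ≤ U

lemma aux_step [FiniteDimensional F L] (m : L →ₗ[F] L →ₗ[F] L) (hm : IsLeibniz m)
    (I : Submodule F L) (hI : IsIdeal m I)
    (hnil : ∀ x y : L, IsNilpotent (m (m x y) : Module.End F L))
    (hQ : AuxNilAct m (mprod m (mprod m I I) (mprod m I I))) :
    AuxNilAct m (mprod m I I) := by
  obtain ⟨D, hD⟩ : ∃ D, D = mprod m I I := ⟨_, rfl⟩
  have hDid : IsIdeal m D := hD ▸ aux_ideal_mprod m hm I hI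
  rw [← hD] at hQ ⊢
  have hEid : IsIdeal m (mprod m D D) := aux_ideal_mprod m hm D hDid
  have hED : mprod m D D ≤ D := Submodule.map₂_le.2 fun a ha b hb => (hDid a b hb).1
  intro V0 U0 hU0 hV0
  obtain ⟨V, hVdef⟩ : ∃ V, V = sSup {W : Submodule F L | W ≤ mprod m D W ⊔ U0} := ⟨_, rfl⟩
  have hmax : ∀ W : Submodule F L, W ≤ mprod m D W ⊔ U0 → W ≤ V := by
    intro W h; rw [hVdef]; exact le_sSup h
  have hV : V ≤ mprod m D V ⊔ U0 := by
    conv_lhs => rw [hVdef]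
    exact sSup_le fun W hW =>
      hW.trans (sup_le_sup_right (Submodule.map₂_le_map₂ le_rfl (hmax W hW)) _)
  have hU0V : U0 ≤ V := hmax U0 le_sup_right
  have hDV : mprod m D V ≤ V := by
    apply hmax
    refine (Submodule.map₂_le_map₂ (f := m) (le_refl D) hV).trans ?_
    rw [mprod, Submodule.map₂_sup_right]
    exact sup_le_sup_left hU0 _
  refine (hmax V0 hV0).trans ?_
  by_contra hcon
  -- maximal invariant proper subspace
  obtain ⟨U, ⟨hU0U, hUV, hVU, hDU⟩, hUmax⟩ : ∃ U : Submodule F L,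
      (U0 ≤ U ∧ U ≤ V ∧ ¬ V ≤ U ∧ mprod m D U ≤ U) ∧
      ∀ W : Submodule F L, (U0 ≤ W ∧ W ≤ V ∧ ¬ V ≤ W ∧ mprod m D W ≤ W) → ¬ U < W := by
    obtain ⟨U, hU, hmx⟩ := WellFounded.has_min (wellFounded_gt (α := Submodule F L))
      {U : Submodule F L | U0 ≤ U ∧ U ≤ V ∧ ¬ V ≤ U ∧ mprod m D U ≤ U}
      ⟨U0, le_rfl, hU0V, hcon, hU0⟩
    exact ⟨U, hU, hmx⟩
  have hirr : ∀ X : Submodule F L, X ≤ V → mprod m D (X ⊔ U) ≤ X ⊔ U → ¬ V ≤ X ⊔ U →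
      X ≤ U := by
    intro X hXV hinv hne
    by_contra hX
    refine hUmax (X ⊔ U) ⟨hU0U.trans le_sup_right, sup_le hXV hUV, hne, hinv⟩ ?_
    exact lt_of_le_of_ne le_sup_right fun h => hX (h ▸ le_sup_left)
  have hEV : mprod m (mprod m D D) V ≤ U := by
    apply hirr
    · exact (Submodule.map₂_le_map₂ hED le_rfl).trans hDV
    · rw [mprod, Submodule.map₂_sup_right]
      refine sup_le_sup ?_ hDU
      refine Submodule.map₂_le.2 fun d hd z hz => ?_
      have : mprod m (mprod m D D) V ≤ (mprod m (mprod m D D) V).comap (m d) := by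
        refine Submodule.map₂_le.2 fun e he v hv => ?_
        rw [Submodule.mem_comap, hm]
        exact add_mem (Submodule.apply_mem_map₂ _ (hEid d e he).1 hv)
          (Submodule.apply_mem_map₂ _ he (hDV (Submodule.apply_mem_map₂ _ hd hv)))
      exact this hz
    · intro h
      exact hVU (hQ V U ((Submodule.map₂_le_map₂ hED le_rfl).trans hDU) h)
  have hcV : ∀ a ∈ I, ∀ b ∈ I, V.map (m (m a b)) ≤ U := by
    intro a ha b hb
    have hcD : m a b ∈ D := hD ▸ Submodule.apply_mem_map₂ _ ha hb
    apply hirr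
    · rintro _ ⟨v, hv, rfl⟩
      exact hDV (Submodule.apply_mem_map₂ _ hcD hv)
    · refine Submodule.map₂_le.2 fun d hd z hz => ?_
      obtain ⟨_, ⟨v, hv, rfl⟩, u, hu, rfl⟩ := Submodule.mem_sup.1 hz
      rw [map_add, hm d (m a b) v]
      refine add_mem (add_mem ?_ ?_) ?_
      · exact Submodule.mem_sup_right (hEV (Submodule.apply_mem_map₂ _
          (Submodule.apply_mem_map₂ _ hd hcD) hv))
      · exact Submodule.mem_sup_left ⟨_, hDV (Submodule.apply_mem_map₂ _ hd hv), rfl⟩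
      · exact Submodule.mem_sup_right (hDU (Submodule.apply_mem_map₂ _ hd hu))
    · intro h
      exact hVU (aux_nak _ (hnil a b) V U
        (fun u hu => hDU (Submodule.apply_mem_map₂ _ hcD hu)) h)
  have hfin : mprod m D V ≤ U := by
    refine Submodule.map₂_le.2 fun d hd v hv => ?_
    have : D ≤ U.comap (m.flip v) := by
      rw [hD]
      exact Submodule.map₂_le.2 fun a ha b hb => hcV a ha b hb ⟨v, hv, rfl⟩
    exact this hd
  exact hVU (hV.trans (sup_le hfin hU0U))

lemma aux_main [FiniteDimensional F L] (m : L →ₗ[F] L →ₗ[F] L) (hm : IsLeibniz m)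
    (hsolv : IsSolvableAlg m)
    (hnil : ∀ x y : L, IsNilpotent (m (m x y) : Module.End F L)) :
    IsStronglySolvable m (⊤ : Submodule F L) := by
  obtain ⟨n, hn⟩ := hsolv
  have hbot : AuxNilAct m (derSeries m ⊤ (n + 1)) := by
    intro V U _ h
    have h1 : derSeries m (⊤ : Submodule F L) (n + 1) = ⊥ := by
      simp [derSeries, hn]
    rw [h1] at h
    simpa using h
  have hall : AuxNilAct m (derSeries m ⊤ 1) := by
    have key : ∀ k, AuxNilAct m (derSeries m ⊤ (k + 1)) → AuxNilAct m (derSeries m ⊤ 1) := by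
      intro k
      induction k with
      | zero => exact id
      | succ k ih => exact fun h => ih (aux_step m hm _ (aux_ideal_der m hm k) hnil h)
    exact key n hbot
  have hid := aux_ideal_der m hm 1
  change IsNilpotentSub m (derSeries m ⊤ 1)
  obtain ⟨D, hD⟩ : ∃ D, D = derSeries m (⊤ : Submodule F L) 1 := ⟨_, rfl⟩
  rw [← hD] at hid hall ⊢
  have hanti : ∀ k, lcSeries m D (k + 1) ≤ lcSeries m D k := by
    intro k
    induction k with
    | zero => exact Submodule.map₂_le.2 fun a ha b hb => (hid a b hb).1
    | succ k ih => exact Submodule.map₂_le_map₂ le_rfl ih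
  obtain ⟨k, hk⟩ := aux_stab _ hanti
  refine ⟨k, ?_⟩
  have := hall (lcSeries m D k) ⊥ (by simp) (by
    rw [sup_bot_eq]; exact le_of_eq hk)
  simpa using this

lemma aux_P (m : L →ₗ[F] L →ₗ[F] L) (S : Submodule F L) (hS : IsSubalg m S)
    (hss : IsStronglySolvable m S) (x y : L) (hx : x ∈ S) (hy : y ∈ S) :
    ∃ k : ℕ, ((m (m x y)) ^ k : Module.End F L) x = 0 ∧
      ((m (m x y)) ^ k : Module.End F L) y = 0 := by
  obtain ⟨k, hk⟩ := hss
  have key : ∀ z ∈ S, ∀ j : ℕ,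
      ((m (m x y)) ^ (j + 1) : Module.End F L) z ∈ lcSeries m (mprod m S S) j := by
    intro z hz j
    induction j with
    | zero =>
      rw [zero_add, pow_one]
      exact Submodule.apply_mem_map₂ _ (hS x hx y hy) hz
    | succ j ih =>
      rw [pow_succ']
      exact Submodule.apply_mem_map₂ _ (Submodule.apply_mem_map₂ _ hx hy) ih
  have h1 := key x hx k
  have h2 := key y hy k
  rw [hk] at h1 h2
  exact ⟨k + 1, by simpa using h1, by simpa using h2⟩

end Aux

/-- Let `L` be a finite-dimensional solvable Leibniz algebra such that
every two-generated proper subalgebra of `L` is strongly solvable. Then `L` is either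
strongly solvable or two-generated. -/
theorem strongly_solvable_or_two_generated
    {F : Type*} [Field F] {L : Type*} [AddCommGroup L] [Module F L]
    [FiniteDimensional F L]
    (m : L →ₗ[F] L →ₗ[F] L) (hm : IsLeibniz m)
    (hsolv : IsSolvableAlg m)
    (h2gen : ∀ S : Submodule F L, IsSubalg m S → S ≠ ⊤ → TwoGenerated m S →
      IsStronglySolvable m S) :
    IsStronglySolvable m (⊤ : Submodule F L) ∨ ∃ x y : L, genBy m {x, y} = ⊤ := by
  by_cases h : ∃ x y : L, genBy m {x, y} = ⊤
  · exact Or.inr h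
  left
  refine aux_main m hm hsolv (aux_nil m hm hsolv ?_)
  intro x y
  have hsub : IsSubalg m (genBy m {x, y}) := by
    intro a ha b hb
    refine Submodule.mem_sInf.2 fun S hS => ?_
    exact hS.1 a (Submodule.mem_sInf.1 ha S hS) b (Submodule.mem_sInf.1 hb S hS)
  refine aux_P m (genBy m {x, y}) hsub
    (h2gen _ hsub (fun h' => h ⟨x, y, h'⟩) ⟨x, y, rfl⟩) x y ?_ ?_
  · exact Submodule.mem_sInf.2 fun S hS => hS.2 (by simp)
  · exact Submodule.mem_sInf.2 fun S hS => hS.2 (by simp)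
end

section
/- Let L be a finite-dimensional solvable Leibniz algebra over a field F with φ(L) = 0 which is minimally non-strongly-solvable and is not a Lie algebra, write L = A + H with A the unique minimal ideal (A = Leib(L)) and H a complementing Lie subalgebra, and let C be the companion Lie algebra on the vector space A ⊕ H with product [a+h, b+k] = hb − ka + hk. Then C is a solvable Lie algebra with φ(C) = 0, A is the unique minimal ideal of C, C is not strongly solvable, and every proper subalgebra of C is strongly solvable (so C is minimally non-strongly-solvable). -/
/-!
Basic theory of (left) Leibniz algebras, formalized over an arbitrary field `F`.
A Leibniz algebra structure on an `F`-vector space `L` is given by a bilinear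
multiplication `m : L →ₗ[F] L →ₗ[F] L` satisfying the left Leibniz identity.
-/

open Submodule Module

section CompanionHelpers

variable {F : Type*} [Field F] {L : Type*} [AddCommGroup L] [Module F L]

lemma lcSeries_mono (m : L →ₗ[F] L →ₗ[F] L) {P Q : Submodule F L} (h : P ≤ Q) (k : ℕ) :
    lcSeries m P k ≤ lcSeries m Q k := by
  induction k with
  | zero => exact h
  | succ k ih => exact Submodule.map₂_le_map₂ h ih

lemma lcSeries_mul (m : L →ₗ[F] L →ₗ[F] L) (hm : IsLeibniz m) (N : Submodule F L) (i : ℕ) :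
    ∀ j, ∀ x ∈ lcSeries m N i, ∀ y ∈ lcSeries m N j, m x y ∈ lcSeries m N (i + j + 1) := by
  induction i with
  | zero =>
    intro j x hx y hy
    rw [Nat.zero_add]
    exact Submodule.apply_mem_map₂ m hx hy
  | succ i ih =>
    intro j x hx y hy
    have hle : lcSeries m N (i + 1) ≤ (lcSeries m N (i + 1 + j + 1)).comap (m.flip y) := by
      refine Submodule.map₂_le.mpr ?_
      intro a ha b hb
      simp only [Submodule.mem_comap, LinearMap.flip_apply]
      have h1 : m (m a b) y = m a (m b y) - m b (m a y) := by
        rw [hm a b y]; abel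
      rw [h1]
      refine Submodule.sub_mem _ ?_ ?_
      · have e : i + 1 + j + 1 = (i + j + 1) + 1 := by omega
        rw [e]
        exact Submodule.apply_mem_map₂ m ha (ih j b hb y hy)
      · have e : i + 1 + j + 1 = i + (j + 1) + 1 := by omega
        rw [e]
        exact ih (j + 1) b hb _ (Submodule.apply_mem_map₂ m ha hy)
    exact hle hx

lemma exists_minIdeal_le [FiniteDimensional F L] (m : L →ₗ[F] L →ₗ[F] L) (I : Submodule F L)
    (hI : IsIdeal m I) (hne : I ≠ ⊥) : ∃ J, IsMinIdeal m J ∧ J ≤ I := by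
  have hwf : WellFounded ((· < ·) : Submodule F L → Submodule F L → Prop) := wellFounded_lt
  obtain ⟨J, ⟨hJ1, hJ2, hJ3⟩, hmin⟩ :=
    hwf.has_min {J : Submodule F L | IsIdeal m J ∧ J ≠ ⊥ ∧ J ≤ I} ⟨I, hI, hne, le_rfl⟩
  refine ⟨J, ⟨hJ1, hJ2, ?_⟩, hJ3⟩
  intro K hK hKJ
  by_cases hb : K = ⊥
  · exact Or.inl hb
  · right
    by_contra hne'
    exact hmin K ⟨hK, hb, hKJ.trans hJ3⟩ (lt_of_le_of_ne hKJ hne')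

lemma leibIdeal_mul (m : L →ₗ[F] L →ₗ[F] L) (hm : IsLeibniz m) :
    ∀ a ∈ leibIdeal m, ∀ y, m a y = 0 := by
  intro a ha y
  have hle : leibIdeal m ≤ LinearMap.ker (m.flip y) := by
    refine Submodule.span_le.mpr ?_
    rintro z ⟨x, rfl⟩
    have := hm x x y
    simpa using this
  simpa using hle ha

end CompanionHelpers

/-- Let `L` be a finite-dimensional solvable Leibniz algebra with
`φ(L) = 0` which is minimally non-strongly-solvable and not a Lie algebra. Write
`L = A + H` with `A` the unique minimal ideal (`A = Leib(L)`) and `H` a complementing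
Lie subalgebra, and let `C` be the companion Lie algebra on the same vector space, with
product `[a+h, b+k] = hb − ka + hk` (given here by the bilinear map `m'`). Then `C` is a
solvable Lie algebra with `φ(C) = 0`, `A` is the unique minimal ideal of `C`, `C` is not
strongly solvable, and every proper subalgebra of `C` is strongly solvable (so `C` is
minimally non-strongly-solvable). -/
theorem companion_of_minimally_non_strongly_solvable
    {F : Type*} [Field F] {L : Type*} [AddCommGroup L] [Module F L]
    [FiniteDimensional F L]
    (m : L →ₗ[F] L →ₗ[F] L) (hm : IsLeibniz m)
    (hsolv : IsSolvableAlg m)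
    (hphi : frattiniIdeal m = ⊥)
    (hnotss : ¬ IsStronglySolvable m (⊤ : Submodule F L))
    (hproper : ∀ S : Submodule F L, IsSubalg m S → S ≠ ⊤ → IsStronglySolvable m S)
    (hnotLie : ¬ IsLie m)
    (A H : Submodule F L)
    (hmin : IsMinIdeal m A) (huniq : ∀ A', IsMinIdeal m A' → A' = A)
    (hleib : A = leibIdeal m)
    (hH : IsSubalg m H) (hHLie : ∀ h ∈ H, ∀ k ∈ H, m h k = - m k h)
    (hdisj : A ⊓ H = ⊥) (hsum : A ⊔ H = ⊤)
    (m' : L →ₗ[F] L →ₗ[F] L)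
    (hm' : ∀ a ∈ A, ∀ h ∈ H, ∀ b ∈ A, ∀ k ∈ H,
      m' (a + h) (b + k) = m h b - m k a + m h k) :
    IsLie m' ∧ IsLeibniz m' ∧ IsSolvableAlg m' ∧
    frattiniIdeal m' = ⊥ ∧
    IsMinIdeal m' A ∧ (∀ A', IsMinIdeal m' A' → A' = A) ∧
    ¬ IsStronglySolvable m' (⊤ : Submodule F L) ∧
    (∀ S : Submodule F L, IsSubalg m' S → S ≠ ⊤ → IsStronglySolvable m' S) := by
  subst hleib
  set A := leibIdeal m with hA
  have hAL : ∀ a ∈ A, ∀ y, m a y = 0 := leibIdeal_mul m hm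
  have hAid := hmin.1
  have hcompl : IsCompl A H := IsCompl.of_eq hdisj hsum
  obtain ⟨p, hpA, hpH, hpa, hph⟩ : ∃ p : L →ₗ[F] L, (∀ x, p x ∈ A) ∧ (∀ x, x - p x ∈ H) ∧
      (∀ a ∈ A, p a = a) ∧ (∀ h ∈ H, p h = 0) := by
    refine ⟨A.subtype ∘ₗ Submodule.projectionOnto A H hcompl, ?_, ?_, ?_, ?_⟩
    · intro x; simp
    · intro x
      refine (Submodule.projectionOnto_apply_eq_zero_iff hcompl).mp ?_
      rw [map_sub, sub_eq_zero]
      exact (Submodule.projectionOnto_apply_left hcompl _).symm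
    · intro a ha
      have := Submodule.projectionOnto_apply_left hcompl ⟨a, ha⟩
      simp only [] at this
      simp [this]
    · intro h hh
      have := (Submodule.projectionOnto_apply_eq_zero_iff hcompl).mpr hh
      simp [this]
  have hqm : ∀ x y, m (x - p x) y = m x y := by
    intro x y; rw [map_sub, LinearMap.sub_apply, hAL _ (hpA x), sub_zero]
  have hf : ∀ x y, m' x y = m x y - m y (p x) := by
    intro x y
    have h := hm' (p x) (hpA x) (x - p x) (hpH x) (p y) (hpA y) (y - p y) (hpH y)
    rw [add_sub_cancel, add_sub_cancel, hqm, hqm, hqm, map_sub] at h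
    rw [h]; abel
  have hpm : ∀ x y, p (m x y) = m x (p y) := by
    intro x y
    have h1 : m x y = m x (p y) + m (x - p x) (y - p y) := by
      rw [hqm, map_sub]; abel
    rw [h1, map_add, hpa _ (hAid x _ (hpA y)).1, hph _ (hH _ (hpH x) _ (hpH y)), add_zero]
  have hmq : ∀ x y, m x y = m' (x - p x) y := by
    intro x y
    rw [hf, hqm, map_sub, hpa _ (hpA x), sub_self, map_zero, sub_zero]
  have hAm : ∀ x, ∀ a ∈ A, m' x a = m x a := by
    intro x a ha; rw [hf, hAL a ha, sub_zero]
  have hpp : ∀ x, p (p x) = p x := fun x => hpa _ (hpA x)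
  have hLie : IsLie m' := by
    intro x y
    have h := hHLie _ (hpH x) _ (hpH y)
    rw [hqm, hqm, map_sub, map_sub] at h
    rw [hf, hf]
    linear_combination (norm := module) h
  have hLeib : IsLeibniz m' := by
    intro x y z
    have h1 := hm x y z
    have h2 := hm x z (p y)
    have h3 := hm y z (p x)
    simp only [hf, map_sub, LinearMap.sub_apply, hpm, hpp]
    rw [hAL _ (hAid z _ (hpA y)).1, hAL _ (hAid y _ (hpA x)).1, hAL _ (hAid z _ (hpA x)).1]
    linear_combination (norm := module) h1 - h2 + h3
  -- graded subspaces
  have hsq : ∀ S : Submodule F L, (∀ x ∈ S, p x ∈ S) → mprod m' S S = mprod m S S := by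
    intro S hS
    apply le_antisymm
    · refine Submodule.map₂_le.mpr ?_
      intro x hx y hy
      rw [hf]
      exact Submodule.sub_mem _ (Submodule.apply_mem_map₂ m hx hy)
        (Submodule.apply_mem_map₂ m hy (hS x hx))
    · refine Submodule.map₂_le.mpr ?_
      intro x hx y hy
      rw [hmq]
      exact Submodule.apply_mem_map₂ m' (Submodule.sub_mem _ hx (hS x hx)) hy
  have hsqp : ∀ S : Submodule F L, (∀ x ∈ S, p x ∈ S) → ∀ x ∈ mprod m S S, p x ∈ mprod m S S := by
    intro S hS
    have : mprod m S S ≤ (mprod m S S).comap p := by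
      refine Submodule.map₂_le.mpr ?_
      intro x hx y hy
      rw [Submodule.mem_comap, hpm]
      exact Submodule.apply_mem_map₂ m hx (hS y hy)
    exact fun x hx => this hx
  have hlc1 : ∀ N : Submodule F L, (∀ x ∈ N, p x ∈ N) → ∀ k, lcSeries m' N k ≤ lcSeries m N k := by
    intro N hN k
    induction k with
    | zero => exact le_rfl
    | succ k ih =>
      refine Submodule.map₂_le.mpr ?_
      intro x hx y hy
      rw [hf]
      refine Submodule.sub_mem _ (Submodule.apply_mem_map₂ m hx (ih hy)) ?_
      exact lcSeries_mul m hm N k 0 y (ih hy) (p x) (hN x hx)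
  have hlc2 : ∀ N : Submodule F L, (∀ x ∈ N, p x ∈ N) → ∀ k, lcSeries m N k ≤ lcSeries m' N k := by
    intro N hN k
    induction k with
    | zero => exact le_rfl
    | succ k ih =>
      refine Submodule.map₂_le.mpr ?_
      intro x hx y hy
      rw [hmq]
      exact Submodule.apply_mem_map₂ m' (Submodule.sub_mem _ hx (hN x hx)) (ih hy)
  have hss : ∀ S : Submodule F L, (∀ x ∈ S, p x ∈ S) →
      (IsStronglySolvable m' S ↔ IsStronglySolvable m S) := by
    intro S hS
    unfold IsStronglySolvable IsNilpotentSub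
    rw [hsq S hS]
    constructor
    · rintro ⟨k, hk⟩
      exact ⟨k, le_bot_iff.mp ((hlc2 _ (hsqp S hS) k).trans hk.le)⟩
    · rintro ⟨k, hk⟩
      exact ⟨k, le_bot_iff.mp ((hlc1 _ (hsqp S hS) k).trans hk.le)⟩
  have hsolv' : IsSolvableAlg m' := by
    obtain ⟨n, hn⟩ := hsolv
    refine ⟨n, ?_⟩
    rw [← hn]
    have : ∀ n, (∀ x ∈ derSeries m ⊤ n, p x ∈ derSeries m ⊤ n) ∧
        derSeries m' ⊤ n = derSeries m ⊤ n := by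
      intro n
      induction n with
      | zero => exact ⟨fun _ _ => Submodule.mem_top, rfl⟩
      | succ n ih =>
        refine ⟨hsqp _ ih.1, ?_⟩
        change mprod m' (derSeries m' ⊤ n) (derSeries m' ⊤ n) = mprod m _ _
        rw [ih.2, hsq _ ih.1]
    exact (this n).2
  have hAid' : IsIdeal m' A := by
    intro x y hy
    have h1 : m' x y ∈ A := by rw [hAm x y hy]; exact (hAid x y hy).1
    exact ⟨h1, by rw [hLie]; exact A.neg_mem h1⟩
  -- a subspace of `A` stable under `H` is trivial
  have hstab : ∀ J : Submodule F L, J ≤ A → (∀ h ∈ H, ∀ y ∈ J, m' h y ∈ J) → J = ⊥ ∨ J = A := by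
    intro J hJA hJ
    refine hmin.2.2 J ?_ hJA
    intro x y hy
    refine ⟨?_, ?_⟩
    · rw [hmq]; exact hJ _ (hpH x) y hy
    · rw [hAL y (hJA hy)]; exact J.zero_mem
  have hmin' : IsMinIdeal m' A :=
    ⟨hAid', hmin.2.1, fun J hJ hJA => hstab J hJA fun h _ y hy => (hJ h y hy).1⟩
  have huniq' : ∀ B, IsMinIdeal m' B → B = A := by
    intro B hB
    by_contra hne
    have hBA : B ⊓ A = ⊥ := by
      have hid : IsIdeal m' (B ⊓ A) := fun x y hy =>
        ⟨⟨(hB.1 x y hy.1).1, (hAid' x y hy.2).1⟩, ⟨(hB.1 x y hy.1).2, (hAid' x y hy.2).2⟩⟩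
      rcases hB.2.2 _ hid inf_le_left with h | h
      · exact h
      · rcases hmin'.2.2 _ hid inf_le_right with h' | h'
        · exact h'
        · exact absurd (h.symm.trans h') hne
    set D : Submodule F L := B.map (LinearMap.id - p) with hD
    have hDH : D ≤ H := by
      rintro _ ⟨b, hb, rfl⟩
      exact hpH b
    have hDA : ∀ d ∈ D, ∀ a ∈ A, m d a = 0 := by
      rintro _ ⟨b, hb, rfl⟩ a ha
      have h1 : m' b a ∈ B ⊓ A := ⟨(hB.1 a b hb).2, (hAid' b a ha).1⟩
      rw [hBA, Submodule.mem_bot, hAm b a ha] at h1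
      simpa [hAL _ (hpA b)] using h1
    have hleft : ∀ x, ∀ d ∈ D, m x d ∈ D := by
      rintro x _ ⟨b, hb, rfl⟩
      refine ⟨m' (x - p x) b, (hB.1 _ b hb).1, ?_⟩
      rw [← hmq]
      simp [hpm]
    have hDid : IsIdeal m D := by
      intro x d hd
      refine ⟨hleft x d hd, ?_⟩
      have h1 : m d x = - m x d := by
        have h2 : m d x = m d (x - p x) := by
          rw [map_sub, hDA d hd _ (hpA x), sub_zero]
        rw [h2, hHLie d (hDH hd) _ (hpH x), hqm]
      rw [h1]
      exact D.neg_mem (hleft x d hd)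
    have hDne : D ≠ ⊥ := by
      intro hb
      apply hB.2.1
      rw [eq_bot_iff, ← hBA]
      refine le_inf le_rfl ?_
      intro b hbB
      have : b - p b ∈ D := ⟨b, hbB, rfl⟩
      rw [hb, Submodule.mem_bot, sub_eq_zero] at this
      rw [this]; exact hpA b
    obtain ⟨J, hJ, hJD⟩ := exists_minIdeal_le m D hDid hDne
    rw [huniq J hJ] at hJD
    apply hmin.2.1
    rw [eq_bot_iff, ← hdisj]
    exact le_inf le_rfl (hJD.trans hDH)
  have hHtop : H ≠ ⊤ := by
    intro h
    rw [h, inf_top_eq] at hdisj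
    exact hmin.2.1 hdisj
  have hHmax : IsMaxSubalg m' H := by
    refine ⟨?_, hHtop, ?_⟩
    · intro x hx y hy
      rw [hf, hph x hx, map_zero, sub_zero]
      exact hH x hx y hy
    · intro T hT hHT
      have h := hstab (T ⊓ A) inf_le_right
        (fun h hh y hy => ⟨hT h (hHT hh) y hy.1, (hAid' h y hy.2).1⟩)
      rcases h with h | h
      · left
        refine le_antisymm ?_ hHT
        intro t ht
        have h1 : p t ∈ T ⊓ A := by
          refine ⟨?_, hpA t⟩
          have := T.sub_mem ht (hHT (hpH t))
          simpa using this
        rw [h, Submodule.mem_bot] at h1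
        have := hpH t
        rwa [h1, sub_zero] at this
      · right
        rw [eq_top_iff, ← hsum]
        exact sup_le (by rw [← h]; exact inf_le_left) hHT
  have hphi' : frattiniIdeal m' = ⊥ := by
    rw [eq_bot_iff]
    refine sSup_le ?_
    rintro I ⟨hI, hIF⟩
    by_contra hne
    rw [le_bot_iff] at hne
    obtain ⟨J, hJ, hJI⟩ := exists_minIdeal_le m' I hI hne
    rw [huniq' J hJ] at hJI
    apply hmin.2.1
    rw [eq_bot_iff, ← hdisj]
    exact le_inf le_rfl ((hJI.trans hIF).trans (sInf_le hHmax))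
  refine ⟨hLie, hLeib, hsolv', hphi', hmin', huniq', ?_, ?_⟩
  · rw [hss ⊤ (fun _ _ => Submodule.mem_top)]; exact hnotss
  · intro S hS hSne
    by_cases hT : S ⊔ A = ⊤
    · -- complement case
      have hid : S ⊓ A = ⊥ := by
        have h := hstab (S ⊓ A) inf_le_right ?_
        · rcases h with h | h
          · exact h
          · exfalso
            apply hSne
            rw [← hT]
            exact (sup_eq_left.mpr (by rw [← h]; exact inf_le_left)).symm
        · intro x _ y hy
          refine ⟨?_, (hAid' x y hy.2).1⟩
          have hx : x ∈ S ⊔ A := by rw [hT]; exact Submodule.mem_top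
          obtain ⟨s, hs, a, ha, rfl⟩ := Submodule.mem_sup.mp hx
          rw [map_add, LinearMap.add_apply, hAm a y hy.2, hAL a ha, add_zero]
          exact hS s hs y hy.1
      have hHss : IsStronglySolvable m' H := by
        rw [hss H (fun x hx => by rw [hph x hx]; exact H.zero_mem)]
        exact hproper H hH hHtop
      obtain ⟨k, hk⟩ := hHss
      refine ⟨k, ?_⟩
      have hqhom : ∀ x y, (LinearMap.id - p : L →ₗ[F] L) (m' x y) =
          m' ((LinearMap.id - p : L →ₗ[F] L) x) ((LinearMap.id - p : L →ₗ[F] L) y) := by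
        intro x y
        change m' x y - p (m' x y) = m' (x - p x) (y - p y)
        rw [← hmq, hf]
        simp only [map_sub, hpm, hpp]
        abel
      have h1 : mprod m' S S ≤ (mprod m' H H).comap (LinearMap.id - p) := by
        refine Submodule.map₂_le.mpr ?_
        intro x _ y _
        rw [Submodule.mem_comap, hqhom]
        exact Submodule.apply_mem_map₂ m' (hpH x) (hpH y)
      have h2 : ∀ k, lcSeries m' (mprod m' S S) k ≤
          (lcSeries m' (mprod m' H H) k).comap (LinearMap.id - p) := by
        intro k
        induction k with
        | zero => exact h1
        | succ k ih =>
          refine Submodule.map₂_le.mpr ?_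
          intro x hx y hy
          rw [Submodule.mem_comap, hqhom]
          exact Submodule.apply_mem_map₂ m' (h1 hx) (ih hy)
      have hSS : mprod m' S S ≤ S := Submodule.map₂_le.mpr hS
      have h3 : ∀ k, lcSeries m' (mprod m' S S) k ≤ S := by
        intro k
        induction k with
        | zero => exact hSS
        | succ k ih =>
          exact Submodule.map₂_le.mpr fun x hx y hy => hS x (hSS hx) y (ih hy)
      rw [eq_bot_iff, ← hid]
      refine le_inf (h3 k) ?_
      intro x hx
      have h4 := h2 k hx
      rw [hk] at h4
      have h5 : x - p x = 0 := h4
      rw [sub_eq_zero.mp h5]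
      exact hpA x
    · have hTp : ∀ x ∈ S ⊔ A, p x ∈ S ⊔ A := fun x _ => le_sup_right (a := S) (hpA x)
      have hTsub' : IsSubalg m' (S ⊔ A) := by
        intro x hx y hy
        obtain ⟨s, hs, a, ha, rfl⟩ := Submodule.mem_sup.mp hx
        obtain ⟨t, ht, b, hb, rfl⟩ := Submodule.mem_sup.mp hy
        have e : m' (s + a) (t + b) = m' s t + (m' a t + m' (s + a) b) := by
          simp only [map_add, LinearMap.add_apply]; abel
        rw [e]
        exact Submodule.add_mem_sup (hS s hs t ht)
          (A.add_mem (hAid' t a ha).2 (hAid' (s + a) b hb).1)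
      have hTsub : IsSubalg m (S ⊔ A) := by
        intro x hx y hy
        rw [hmq]
        exact hTsub' _ (Submodule.sub_mem _ hx (hTp x hx)) y hy
      obtain ⟨k, hk⟩ := (hss _ hTp).mpr (hproper _ hTsub hT)
      refine ⟨k, le_bot_iff.mp (le_trans ?_ hk.le)⟩
      exact lcSeries_mono m' (Submodule.map₂_le_map₂ le_sup_left le_sup_left) k
end
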